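/- arXiv:2105.12199 — 2 statements merged into one kernel-verified Lean document; each statement's English description precedes it below -/
import Mathlib

section
/- Let M be a finite von Neumann algebra and let 𝔣, 𝔤 be normal positive functionals on M. If the left kernels satisfy L_𝔤 ⊆ L_𝔣, then 𝔣 is absolutely continuous with respect to 𝔤. -/
open scoped ComplexOrder

/-- Scalar multiples of elements of a von Neumann algebra stay in it. -/
instance {H : Type} [NormedAddCommGroup H] [InnerProductSpace ℂ H] [CompleteSpace H] :
    SMulMemClass (VonNeumannAlgebra H) ℂ (H →L[ℂ] H) where
  smul_mem {M} c _x hx := M.toStarSubalgebra.smul_mem hx c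

section VonNeumannDefs

variable {H : Type} [NormedAddCommGroup H] [InnerProductSpace ℂ H] [CompleteSpace H]
variable {M : VonNeumannAlgebra H}

/-- The Loewner order on bounded operators: `x ≤ y` iff `y - x` is a positive operator. -/
def OpLE (x y : H →L[ℂ] H) : Prop := (y - x).IsPositive

/-- A linear functional on a von Neumann algebra is positive if `0 ≤ 𝔣 (x⋆ * x)` for
every `x`. -/
def VNIsPos (𝔣 : ↥M →ₗ[ℂ] ℂ) : Prop := ∀ x : ↥M, 0 ≤ 𝔣 (star x * x)

/-- Order on positive functionals: `𝔣 ≤ 𝔤` iff `𝔤 - 𝔣` is positive. -/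
def VNLE (𝔣 𝔤 : ↥M →ₗ[ℂ] ℂ) : Prop := VNIsPos (𝔤 - 𝔣)

/-- A functional `𝔣` on a von Neumann algebra `M` is normal if for every norm-bounded
increasing net `x : ι → M` of positive elements of `M` having a least upper bound `xsup`
in `M` (with respect to the Loewner order), `𝔣 xsup` is the supremum of the `𝔣 (x i)`. -/
def VNIsNormal (𝔣 : ↥M →ₗ[ℂ] ℂ) : Prop :=
  ∀ (ι : Type) [Preorder ι] [IsDirected ι (· ≤ ·)] [Nonempty ι]
    (x : ι → ↥M) (xsup : ↥M),
    (∀ i, (x i : H →L[ℂ] H).IsPositive) →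
    (∀ i j, i ≤ j → OpLE (x i : H →L[ℂ] H) (x j : H →L[ℂ] H)) →
    (∃ C : ℝ, ∀ i, ‖(x i : H →L[ℂ] H)‖ ≤ C) →
    (∀ i, OpLE (x i : H →L[ℂ] H) (xsup : H →L[ℂ] H)) →
    (∀ y : ↥M, (∀ i, OpLE (x i : H →L[ℂ] H) (y : H →L[ℂ] H)) →
      OpLE (xsup : H →L[ℂ] H) (y : H →L[ℂ] H)) →
    IsLUB (Set.range fun i => 𝔣 (x i)) (𝔣 xsup)

/-- Absolute continuity `𝔣 ≪ 𝔤` for normal positive functionals: `𝔣` is the pointwise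
limit of an increasing sequence of normal positive functionals `𝔣ₙ` with `𝔣ₙ ≤ αₙ • 𝔤`
for some positive reals `αₙ`. -/
def VNAbsCont (𝔣 𝔤 : ↥M →ₗ[ℂ] ℂ) : Prop :=
  ∃ (fn : ℕ → (↥M →ₗ[ℂ] ℂ)) (α : ℕ → ℝ),
    (∀ n, VNIsPos (fn n) ∧ VNIsNormal (fn n)) ∧
    (∀ n, 0 < α n) ∧
    (∀ n, VNLE (fn n) (fn (n + 1))) ∧
    (∀ n, VNLE (fn n) (((α n : ℂ)) • 𝔤)) ∧
    (∀ x : ↥M, Filter.Tendsto (fun n => fn n x) Filter.atTop (nhds (𝔣 x)))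

/-- Singularity `𝔣 ⊥ 𝔤`: the only normal positive functional dominated by both `𝔣` and
`𝔤` is `0`. -/
def VNSingular (𝔣 𝔤 : ↥M →ₗ[ℂ] ℂ) : Prop :=
  ∀ p : ↥M →ₗ[ℂ] ℂ, VNIsPos p → VNIsNormal p → VNLE p 𝔣 → VNLE p 𝔤 → p = 0

/-- `𝔣 = 𝔣r + 𝔣s` is a Lebesgue decomposition of `𝔣` with respect to `𝔤` within the
normal positive functionals. -/
def VNIsLebDecomp (𝔣 𝔤 𝔣r 𝔣s : ↥M →ₗ[ℂ] ℂ) : Prop :=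
  VNIsPos 𝔣r ∧ VNIsNormal 𝔣r ∧ VNIsPos 𝔣s ∧ VNIsNormal 𝔣s ∧
    𝔣 = 𝔣r + 𝔣s ∧ VNAbsCont 𝔣r 𝔤 ∧ VNSingular 𝔣s 𝔤

end VonNeumannDefs

section VonNeumannGlobal

variable {H : Type} [NormedAddCommGroup H] [InnerProductSpace ℂ H] [CompleteSpace H]

/-- The Lebesgue decomposition of normal positive functionals over the von Neumann
algebra `M` is unique. -/
def VNLebDecompUnique (M : VonNeumannAlgebra H) : Prop :=
  ∀ 𝔣 𝔤 : ↥M →ₗ[ℂ] ℂ, VNIsPos 𝔣 → VNIsNormal 𝔣 → VNIsPos 𝔤 → VNIsNormal 𝔤 →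
    ∀ 𝔣r 𝔣s 𝔣r' 𝔣s' : ↥M →ₗ[ℂ] ℂ,
      VNIsLebDecomp 𝔣 𝔤 𝔣r 𝔣s → VNIsLebDecomp 𝔣 𝔤 𝔣r' 𝔣s' → 𝔣r = 𝔣r' ∧ 𝔣s = 𝔣s'

/-- A von Neumann algebra is finite if `x⋆x = 1` implies `xx⋆ = 1`. -/
def VNFinite (M : VonNeumannAlgebra H) : Prop :=
  ∀ x : ↥M, star x * x = 1 → x * star x = 1

end VonNeumannGlobal

/-!
On the GNS space of `f + g`, with canonical map `Λ`, the functionals `f` and `g` are given by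
operators `T` and `1 - T` in the commutant. The functionals of `T - T ^ (n + 2) ≤ (n + 1) • (1 - T)`
increase and are dominated by multiples of `g`, and they converge to `f` as soon as `T` has no
nonzero fixed vector.

A fixed vector is a limit of vectors `Λ aₙ` with `g (aₙ⋆ aₙ) → 0`, and it vanishes if also
`f (aₙ⋆ aₙ) → 0`. If `aₙ` is chosen to converge fast, its increments `dₙ` define formally
`h = 1 + ∑ 4ⁿ dₙ⋆ dₙ`, and for `s = h ^ (-1/2)` the sequence `aₙ s` converges in norm to some `b`,
while `aₙ s → 0` would imply `f (aₙ⋆ aₙ) → 0`. Since `g (aₙ⋆ aₙ) → 0`, the functional `g` vanishes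
on every `x` with `x s e = 0`, where `e` is the projection onto the kernel of `b`. Up to the null
projection of `g`, which the inclusion of left kernels makes harmless, no nonzero `y` satisfies
`y s e = 0`, and by finiteness no nonzero `y` satisfies `s e y = 0`. Since `s e (1 - e) = 0`, this
gives `e = 1` and `b = 0`.
-/

namespace VNAbsCont

open Filter Topology
open scoped Ring InnerProductSpace

section CStarAlgebra

theorem norm_map_le_norm_map {A : Type*} [CStarAlgebra A] [PartialOrder A] (φ : A →ₚ[ℂ] ℂ)
    {x y : A} (hx : 0 ≤ x) (hxy : x ≤ y) : ‖φ x‖ ≤ ‖φ y‖ :=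
  CStarAlgebra.norm_le_norm_of_nonneg_of_le (φ.map_nonneg hx) (OrderHomClass.mono φ hxy)

variable {A : Type*} [CStarAlgebra A] [PartialOrder A] [StarOrderedRing A]

theorem star_sqrt (k : A) : star (CFC.sqrt k) = CFC.sqrt k :=
  (CFC.sqrt_nonneg k).isSelfAdjoint.star_eq

theorem mul_self_le_self {k : A} (h0 : 0 ≤ k) (h1 : k ≤ 1) : k * k ≤ k := by
  simpa only [pow_one, pow_two] using CStarAlgebra.pow_antitone h0 h1 one_le_two

theorem mul_sqrt_mul_star {k : A} (hk : 0 ≤ k) (a : A) :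
    a * CFC.sqrt k * star (a * CFC.sqrt k) = a * k * star a := by
  rw [star_mul, star_sqrt, ← mul_assoc, mul_assoc a, CFC.sqrt_mul_sqrt_self k hk]

theorem norm_mul_sqrt_sq {k : A} (hk : 0 ≤ k) (a : A) :
    ‖a * CFC.sqrt k‖ ^ 2 = ‖a * k * star a‖ := by
  rw [← mul_sqrt_mul_star hk, CStarRing.norm_self_mul_star, pow_two]

theorem mul_eq_zero_of_conj_eq_zero {a k : A} (hk : 0 ≤ k) (h : a * k * star a = 0) :
    a * k = 0 := by
  have hsqrt : a * CFC.sqrt k = 0 := by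
    rw [← CStarRing.mul_star_self_eq_zero_iff, mul_sqrt_mul_star hk, h]
  rw [← CFC.sqrt_mul_sqrt_self k hk, ← mul_assoc, hsqrt, zero_mul]

theorem isStrictlyPositive_of_one_le {h : A} (h1 : 1 ≤ h) : IsStrictlyPositive h :=
  isStrictlyPositive_one.of_le h1

theorem ringInverse_mul_of_one_le {h : A} (h1 : 1 ≤ h) : h⁻¹ʳ * h = 1 :=
  Ring.inverse_mul_cancel h (isStrictlyPositive_of_one_le h1).isUnit

theorem mul_ringInverse_of_one_le {h : A} (h1 : 1 ≤ h) : h * h⁻¹ʳ = 1 :=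
  Ring.mul_inverse_cancel h (isStrictlyPositive_of_one_le h1).isUnit

theorem ringInverse_nonneg_of_one_le {h : A} (h1 : 1 ≤ h) : 0 ≤ h⁻¹ʳ :=
  (isStrictlyPositive_of_one_le h1).ringInverse.nonneg

theorem ringInverse_le_ringInverse_of_one_le {h h' : A} (h1 : 1 ≤ h) (hh : h ≤ h') :
    h'⁻¹ʳ ≤ h⁻¹ʳ :=
  CStarAlgebra.ringInverse_le_ringInverse hh (isStrictlyPositive_of_one_le h1)

theorem ringInverse_le_one_of_one_le {h : A} (h1 : 1 ≤ h) : h⁻¹ʳ ≤ 1 := by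
  simpa only [Ring.inverse_one] using ringInverse_le_ringInverse_of_one_le le_rfl h1

theorem ringInverse_mul_eq_self {h z : A} (h1 : 1 ≤ h) (hz : h * z = z) : h⁻¹ʳ * z = z := by
  nth_rw 1 [← hz]
  rw [← mul_assoc, ringInverse_mul_of_one_le h1, one_mul]

theorem sqrt_mul_eq_self {k z : A} (hk : 0 ≤ k) (hz : k * z = z) : CFC.sqrt k * z = z := by
  set s := CFC.sqrt k with hs
  have hunit : (1 + s)⁻¹ʳ * (1 + s) = 1 :=
    ringInverse_mul_of_one_le (le_add_of_nonneg_right (CFC.sqrt_nonneg k))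
  have hss : s * (s * z) = z := by rw [← mul_assoc, hs, CFC.sqrt_mul_sqrt_self k hk, hz]
  have hker : (1 + s) * (s * z - z) = 0 := by
    rw [mul_sub, add_mul, add_mul, hss, one_mul, one_mul]
    abel
  rw [← sub_eq_zero, ← one_mul (s * z - z), ← hunit, mul_assoc, hker, mul_zero]

theorem one_sub_ringInverse_le {h : A} (h1 : 1 ≤ h) : 1 - h⁻¹ʳ ≤ h - 1 := by
  have hstar : star (1 - h⁻¹ʳ) = 1 - h⁻¹ʳ := by
    rw [star_sub, star_one, (ringInverse_nonneg_of_one_le h1).isSelfAdjoint.star_eq]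
  have hconj := star_left_conjugate_nonneg (zero_le_one.trans h1) (1 - h⁻¹ʳ)
  rw [hstar, sub_mul, one_mul, ringInverse_mul_of_one_le h1, mul_sub, mul_one, sub_mul h,
    mul_ringInverse_of_one_le h1, one_mul] at hconj
  exact sub_nonneg.1 hconj

/- With `y = d * h⁻¹ʳ * star d` the hypothesis gives `c • (y * y) ≤ y`, hence
`c * ‖y‖ ^ 2 ≤ ‖y‖`. -/
theorem mul_norm_conj_ringInverse_le_one {c : ℝ} {d h : A} (hc : 0 ≤ c) (h1 : 1 ≤ h)
    (hd : c • (star d * d) ≤ h) : c * ‖d * h⁻¹ʳ * star d‖ ≤ 1 := by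
  have hinv := ringInverse_nonneg_of_one_le h1
  set y := d * h⁻¹ʳ * star d with hy
  have hy0 : 0 ≤ y := star_right_conjugate_nonneg hinv d
  have hyy : c • (y * y) ≤ y := by
    have hconj := star_right_conjugate_le_conjugate hd (d * h⁻¹ʳ)
    rw [star_mul, hinv.isSelfAdjoint.star_eq, mul_assoc d _ h, ringInverse_mul_of_one_le h1,
      mul_one, ← mul_assoc d] at hconj
    convert hconj using 1
    simp only [hy, mul_smul_comm, smul_mul_assoc, mul_assoc]
  have hnorm : c * ‖y‖ * ‖y‖ ≤ 1 * ‖y‖ := calc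
    c * ‖y‖ * ‖y‖ = ‖c • (y * y)‖ := by
      rw [norm_smul, hy0.isSelfAdjoint.norm_mul_self, Real.norm_of_nonneg hc, pow_two, mul_assoc]
    _ ≤ 1 * ‖y‖ := by
      rw [one_mul]
      exact CStarAlgebra.norm_le_norm_of_nonneg_of_le
        (smul_nonneg hc hy0.isSelfAdjoint.mul_self_nonneg) hyy
  rcases (norm_nonneg y).eq_or_lt with h0 | hpos
  · simp only [← h0, mul_zero, zero_le_one]
  · exact le_of_mul_le_mul_right hnorm hpos

theorem mul_norm_conj_le_one {c : ℝ} {d h k : A} (hc : 0 ≤ c) (h1 : 1 ≤ h)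
    (hd : c • (star d * d) ≤ h) (hk : 0 ≤ k) (hkh : k ≤ h⁻¹ʳ) :
    c * ‖d * k * star d‖ ≤ 1 :=
  (mul_le_mul_of_nonneg_left (CStarAlgebra.norm_le_norm_of_nonneg_of_le
    (star_right_conjugate_nonneg hk d) (star_right_conjugate_le_conjugate hkh d)) hc).trans
    (mul_norm_conj_ringInverse_le_one hc h1 hd)

/-- The elements `(1 + n b⋆b)⁻¹`, which decrease to the projection onto the kernel of `b`
when `b` is an operator. -/
noncomputable def kerApprox (b : A) (n : ℕ) : A := (1 + (n : ℝ) • (star b * b))⁻¹ʳ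

theorem one_le_one_add_smul (b : A) (n : ℕ) : 1 ≤ 1 + (n : ℝ) • (star b * b) :=
  le_add_of_nonneg_right (smul_nonneg n.cast_nonneg (star_mul_self_nonneg b))

theorem kerApprox_nonneg (b : A) (n : ℕ) : 0 ≤ kerApprox b n :=
  ringInverse_nonneg_of_one_le (one_le_one_add_smul b n)

theorem kerApprox_le_one (b : A) (n : ℕ) : kerApprox b n ≤ 1 :=
  ringInverse_le_one_of_one_le (one_le_one_add_smul b n)

theorem antitone_kerApprox (b : A) : Antitone (kerApprox b) := fun i j hij =>
  ringInverse_le_ringInverse_of_one_le (one_le_one_add_smul b i) <| by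
    gcongr
    exact star_mul_self_nonneg b

theorem smul_kerApprox_mul (b : A) (n : ℕ) :
    (n : ℝ) • (kerApprox b n * star b) * b = 1 - kerApprox b n := by
  have h := ringInverse_mul_of_one_le (one_le_one_add_smul b n)
  rw [mul_add, mul_one, mul_smul_comm] at h
  rw [smul_mul_assoc, mul_assoc, eq_sub_iff_add_eq, add_comm]
  exact h

theorem mul_eq_zero_of_le_kerApprox {b k : A} (hk : 0 ≤ k) (h : ∀ n, k ≤ kerApprox b n) :
    b * k = 0 := by
  have hbound : ∀ n : ℕ, ‖b * k * star b‖ ≤ 1 / ((n : ℝ) + 1) := fun n => by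
    have := mul_norm_conj_le_one (n + 1).cast_nonneg (one_le_one_add_smul b (n + 1))
      (le_add_of_nonneg_left zero_le_one) hk (h (n + 1))
    rw [le_div_iff₀ n.cast_add_one_pos, mul_comm]
    exact_mod_cast this
  refine mul_eq_zero_of_conj_eq_zero hk (norm_le_zero_iff.1 ?_)
  exact ge_of_tendsto' tendsto_one_div_add_atTop_nhds_zero_nat hbound

section PositiveFunctional

variable (φ : A →ₚ[ℂ] ℂ)

theorem norm_map_conj_le {c : A} (hc : 0 ≤ c) (z : A) :
    ‖φ (star z * c * z)‖ ≤ ‖c‖ * ‖φ (star z * z)‖ := by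
  have h := norm_map_le_norm_map φ (star_left_conjugate_nonneg hc z)
    (CStarAlgebra.star_left_conjugate_le_norm_smul hc.isSelfAdjoint)
  rwa [← Complex.coe_smul, map_smul, norm_smul, Complex.norm_real, norm_norm] at h

theorem norm_map_star_mul_sq_le (x y : A) :
    ‖φ (star x * y)‖ ^ 2 ≤ ‖φ (star x * x)‖ * ‖φ (star y * y)‖ := by
  have hsq : ∀ a : A, ‖φ.toPreGNS a‖ ^ 2 = ‖φ (star a * a)‖ := fun a => by
    rw [← Complex.norm_of_nonneg (sq_nonneg ‖φ.toPreGNS a‖), Complex.ofReal_pow,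
      φ.preGNS_norm_sq, φ.ofPreGNS_toPreGNS]
  rw [← hsq, ← hsq, ← mul_pow]
  exact pow_le_pow_left₀ (norm_nonneg _)
    (norm_inner_le_norm (𝕜 := ℂ) (φ.toPreGNS x) (φ.toPreGNS y)) 2

theorem map_mul_eq_zero {z : A} (hz : φ (star z * z) = 0) (w : A) : φ (w * z) = 0 := by
  have h := norm_map_star_mul_sq_le φ (star w) z
  rw [star_star, hz, norm_zero, mul_zero] at h
  exact norm_eq_zero.1 (pow_eq_zero_iff two_ne_zero |>.1 (h.antisymm (sq_nonneg _)))

theorem map_star_mul_eq_zero {z : A} (hz : φ (star z * z) = 0) (w : A) : φ (star z * w) = 0 := by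
  have h := norm_map_star_mul_sq_le φ z w
  rw [hz, norm_zero, zero_mul] at h
  exact norm_eq_zero.1 (pow_eq_zero_iff two_ne_zero |>.1 (h.antisymm (sq_nonneg _)))

theorem map_star_mul_self_mul_one_sub {z : A} (hz : φ (star z * z) = 0) (a : A) :
    φ (star (a * (1 - z)) * (a * (1 - z))) = φ (star a * a) := by
  have hexpand : star (a * (1 - z)) * (a * (1 - z)) =
      star a * a - star a * a * z - star z * (star a * a * (1 - z)) := by
    rw [star_mul, star_sub, star_one]
    noncomm_ring
  rw [hexpand, map_sub, map_sub, map_mul_eq_zero φ hz, map_star_mul_eq_zero φ hz, sub_zero,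
    sub_zero]

theorem norm_map_sq_le_conj_ringInverse {h : A} (h1 : 1 ≤ h) (w : A) :
    ‖φ w‖ ^ 2 ≤ ‖φ (w * h⁻¹ʳ * star w)‖ * ‖φ h‖ := by
  have hstar : star h = h := (isStrictlyPositive_of_one_le h1).nonneg.isSelfAdjoint.star_eq
  set t := CFC.sqrt h⁻¹ʳ
  have htt : t * t = h⁻¹ʳ := CFC.sqrt_mul_sqrt_self _ (ringInverse_nonneg_of_one_le h1)
  have hconj : ∀ x y : A, x * t * (t * y) = x * h⁻¹ʳ * y := fun x y => by
    rw [mul_assoc, ← mul_assoc t, htt, mul_assoc]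
  have hcs := norm_map_star_mul_sq_le φ (t * star w) (t * h)
  simpa only [star_mul, star_star, star_sqrt, t, hstar, hconj, mul_assoc w,
    mul_ringInverse_of_one_le h1, ringInverse_mul_of_one_le h1, mul_one, one_mul] using hcs

end PositiveFunctional

end CStarAlgebra

section WeakOperatorTopology

variable {H : Type*} [NormedAddCommGroup H] [InnerProductSpace ℂ H]

theorem nonneg_iff_inner_nonneg (T : H →L[ℂ] H) : 0 ≤ T ↔ ∀ v, 0 ≤ ⟪T v, v⟫_ℂ := by
  rw [ContinuousLinearMap.nonneg_iff_isPositive]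
  refine ⟨fun h v => h.inner_nonneg_left v, fun h => ?_⟩
  refine (ContinuousLinearMap.isPositive_iff_complex T).2 fun v => ?_
  have hv := Complex.nonneg_iff.1 (h v)
  exact ⟨Complex.ext rfl hv.2, hv.1⟩

theorem le_iff_inner_le {S T : H →L[ℂ] H} : S ≤ T ↔ ∀ v, ⟪S v, v⟫_ℂ ≤ ⟪T v, v⟫_ℂ := by
  rw [ContinuousLinearMap.le_def, ← ContinuousLinearMap.nonneg_iff_isPositive,
    nonneg_iff_inner_nonneg]
  simp only [sub_apply, inner_sub_left, sub_nonneg]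

/-- Convergence of a net of bounded operators in the weak operator topology. -/
def TendstoWOT {ι : Type*} [Preorder ι] (x : ι → H →L[ℂ] H) (T : H →L[ℂ] H) : Prop :=
  Tendsto (fun i => ContinuousLinearMapWOT.ofCLM (x i)) atTop
    (𝓝 (ContinuousLinearMapWOT.ofCLM T))

variable {ι : Type*} [Preorder ι] {x : ι → H →L[ℂ] H} {S T : H →L[ℂ] H}

theorem tendstoWOT_iff_inner [CompleteSpace H] :
    TendstoWOT x T ↔ ∀ v w, Tendsto (fun i => ⟪x i v, w⟫_ℂ) atTop (𝓝 ⟪T v, w⟫_ℂ) := by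
  rw [TendstoWOT, ContinuousLinearMapWOT.tendsto_iff_forall_inner_apply_tendsto]
  refine forall₂_congr fun v w => ⟨fun h => ?_, fun h => ?_⟩
  all_goals
    have hconj := (Complex.continuous_conj.tendsto _).comp h
    simpa only [Function.comp_def, inner_conj_symm, ContinuousLinearMapWOT.ofCLM_apply] using hconj

theorem tendstoWOT_const (T : H →L[ℂ] H) : TendstoWOT (fun _ : ι => T) T :=
  tendsto_const_nhds

theorem TendstoWOT.mul_mul (h : TendstoWOT x T) (a b : H →L[ℂ] H) :
    TendstoWOT (fun i => a * x i * b) (a * T * b) := by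
  have hb := (ContinuousLinearMapWOT.continuous_precomp
    (G := H) (ContinuousLinearMapWOT.ofCLM b)).continuousAt.tendsto.comp h
  exact ((ContinuousLinearMapWOT.continuous_postcomp
    (ContinuousLinearMapWOT.ofCLM a)).tendsto _).comp hb

theorem TendstoWOT.const_sub (h : TendstoWOT x T) (S : H →L[ℂ] H) :
    TendstoWOT (fun i => S - x i) (S - T) :=
  Tendsto.const_sub _ h

theorem exists_tendsto_inner_self_of_antitone (hx : Antitone x) (h0 : ∀ i, 0 ≤ x i) (v : H) :
    ∃ c, Tendsto (fun i => ⟪x i v, v⟫_ℂ) atTop (𝓝 c) := by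
  have hnonneg := fun i => Complex.nonneg_iff.1 ((nonneg_iff_inner_nonneg (x i)).1 (h0 i) v)
  have hanti : Antitone fun i => (⟪x i v, v⟫_ℂ).re := fun i j hij =>
    (Complex.le_def.1 (le_iff_inner_le.1 (hx hij) v)).1
  have hlim := tendsto_atTop_ciInf hanti
    ⟨0, Set.forall_mem_range.2 fun i => (hnonneg i).1⟩
  refine ⟨_, ((Complex.continuous_ofReal.tendsto _).comp hlim).congr fun i => ?_⟩
  exact Complex.ext rfl (hnonneg i).2

section Directed

variable [IsDirected ι (· ≤ ·)] [Nonempty ι]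

theorem TendstoWOT.unique (hS : TendstoWOT x S) (hT : TendstoWOT x T) : S = T :=
  ContinuousLinearMapWOT.ofCLM_injective (tendsto_nhds_unique hS hT)

variable [CompleteSpace H]

theorem TendstoWOT.eventually_le (h : TendstoWOT x T) (hS : ∀ᶠ i in atTop, x i ≤ S) : T ≤ S :=
  le_iff_inner_le.2 fun v => le_of_tendsto (tendstoWOT_iff_inner.1 h v v)
    (hS.mono fun _ hi => le_iff_inner_le.1 hi v)

theorem TendstoWOT.eventually_ge (h : TendstoWOT x T) (hS : ∀ᶠ i in atTop, S ≤ x i) : S ≤ T :=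
  le_iff_inner_le.2 fun v => ge_of_tendsto (tendstoWOT_iff_inner.1 h v v)
    (hS.mono fun _ hi => le_iff_inner_le.1 hi v)

theorem TendstoWOT.le_of_antitone (h : TendstoWOT x T) (hx : Antitone x) (i : ι) : T ≤ x i :=
  h.eventually_le ((eventually_ge_atTop i).mono fun _ hij => hx hij)

theorem TendstoWOT.mem {M : VonNeumannAlgebra H} (h : TendstoWOT x T) (hx : ∀ i, x i ∈ M) :
    T ∈ M := by
  rw [← M.commutant_commutant, VonNeumannAlgebra.mem_commutant_iff]
  intro y hy
  have hcomm : ∀ i, y * x i = x i * y := fun i =>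
    (VonNeumannAlgebra.mem_commutant_iff.1 hy (x i) (hx i)).symm
  have hleft := h.mul_mul y 1
  have hright := h.mul_mul 1 y
  simp only [mul_one, one_mul, hcomm] at hleft hright
  exact hleft.unique hright

theorem exists_tendstoWOT_of_tendsto_inner {C : ℝ} (hC : ∀ᶠ i in atTop, ‖x i‖ ≤ C)
    (hx : ∀ v w, ∃ c, Tendsto (fun i => ⟪x i v, w⟫_ℂ) atTop (𝓝 c)) :
    ∃ T, TendstoWOT x T := by
  choose B hB using hx
  have hbound : ∀ v w, ‖B v w‖ ≤ C * ‖v‖ * ‖w‖ := fun v w =>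
    le_of_tendsto (hB v w).norm <| hC.mono fun i hi => (norm_inner_le_norm _ _).trans
      (mul_le_mul_of_nonneg_right ((x i).le_of_opNorm_le hi v) (norm_nonneg w))
  let form : H →ₗ⋆[ℂ] H →ₗ[ℂ] ℂ := LinearMap.mk₂'ₛₗ _ _ B
    (fun v v' w => tendsto_nhds_unique (hB _ _) (by
      simpa only [map_add, inner_add_left] using (hB v w).add (hB v' w)))
    (fun c v w => tendsto_nhds_unique (hB _ _) (by
      simpa only [map_smul, inner_smul_left, smul_eq_mul] using
        (hB v w).const_mul (starRingEnd ℂ c)))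
    (fun v w w' => tendsto_nhds_unique (hB _ _) (by
      simpa only [inner_add_right] using (hB v w).add (hB v w')))
    (fun c v w => tendsto_nhds_unique (hB _ _) (by
      simpa only [inner_smul_right, RingHom.id_apply, smul_eq_mul] using (hB v w).const_mul c))
  refine ⟨InnerProductSpace.continuousLinearMapOfBilin (form.mkContinuous₂ C hbound),
    tendstoWOT_iff_inner.2 fun v w => ?_⟩
  rw [InnerProductSpace.continuousLinearMapOfBilin_apply]
  exact hB v w

/-- **Vigier's theorem** -/
theorem exists_tendstoWOT_of_antitone (hx : Antitone x) (h0 : ∀ i, 0 ≤ x i) :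
    ∃ T, TendstoWOT x T := by
  obtain ⟨i₀⟩ := ‹Nonempty ι›
  have hnorm : ∀ᶠ i in atTop, ‖x i‖ ≤ ‖x i₀‖ := (eventually_ge_atTop i₀).mono fun i hi =>
    CStarAlgebra.norm_le_norm_of_nonneg_of_le (h0 i) (hx hi)
  refine exists_tendstoWOT_of_tendsto_inner hnorm fun v w => ?_
  choose c hc using exists_tendsto_inner_self_of_antitone hx h0
  refine ⟨_, Tendsto.congr (fun i => (inner_map_polarization' (x i).toLinearMap v w).symm)
    ((((hc (v + w)).sub (hc (v - w))).sub ((hc (v + Complex.I • w)).const_mul Complex.I)).add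
      ((hc (v - Complex.I • w)).const_mul Complex.I) |>.div_const 4)⟩

end Directed

end WeakOperatorTopology

section VonNeumannAlgebra

variable {H : Type} [NormedAddCommGroup H] [InnerProductSpace ℂ H] [CompleteSpace H]

scoped instance isClosed_coe (M : VonNeumannAlgebra H) : IsClosed (M : Set (H →L[ℂ] H)) := by
  rw [← M.centralizer_centralizer]
  exact Set.isClosed_centralizer _

theorem sqrt_mem {M : VonNeumannAlgebra H} {x : H →L[ℂ] H} (hx : x ∈ M) : CFC.sqrt x ∈ M := by
  rw [← M.commutant_commutant, VonNeumannAlgebra.mem_commutant_iff]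
  intro y hy
  have hcomm : Commute x y := VonNeumannAlgebra.mem_commutant_iff.1 hy x hx
  exact (hcomm.cfcₙ_nnreal _).symm

scoped instance starOrderedRing (M : VonNeumannAlgebra H) : StarOrderedRing M := by
  refine StarOrderedRing.of_nonneg_iff' (fun {x y} hxy z => ?_) fun x => ⟨fun hx => ?_, ?_⟩
  · exact add_le_add_right (α := H →L[ℂ] H) hxy z
  · have hx' : 0 ≤ (x : H →L[ℂ] H) := hx
    refine ⟨⟨CFC.sqrt (x : H →L[ℂ] H), sqrt_mem x.2⟩, Subtype.ext ?_⟩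
    change (x : H →L[ℂ] H) = star (CFC.sqrt (x : H →L[ℂ] H)) * CFC.sqrt (x : H →L[ℂ] H)
    rw [star_sqrt, CFC.sqrt_mul_sqrt_self _ hx']
  · rintro ⟨s, rfl⟩
    exact star_mul_self_nonneg (s : H →L[ℂ] H)

variable {M : VonNeumannAlgebra H}

theorem exists_positiveLinearMap {φ : M →ₗ[ℂ] ℂ} (hφ : VNIsPos φ) :
    ∃ ψ : M →ₚ[ℂ] ℂ, ψ.toLinearMap = φ := by
  refine ⟨PositiveLinearMap.mk₀ φ fun x hx => ?_, rfl⟩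
  obtain ⟨s, rfl⟩ := CStarAlgebra.nonneg_iff_eq_star_mul_self.1 hx
  exact hφ s

section Nets

variable {ι : Type} [Preorder ι] [IsDirected ι (· ≤ ·)] [Nonempty ι] {x : ι → M} {k : M}

theorem exists_mem_tendstoWOT_of_antitone (hx : Antitone x) (h0 : ∀ i, 0 ≤ x i) :
    ∃ k : M, TendstoWOT (fun i => (x i : H →L[ℂ] H)) k := by
  obtain ⟨T, hT⟩ := exists_tendstoWOT_of_antitone (x := fun i => (x i : H →L[ℂ] H)) hx h0
  exact ⟨⟨T, hT.mem fun i => (x i).2⟩, hT⟩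

theorem tendsto_map_of_monotone {φ : M →ₚ[ℂ] ℂ} (hφ : VNIsNormal φ.toLinearMap)
    (hx : Monotone x) (h0 : ∀ i, 0 ≤ x i) (hk : TendstoWOT (fun i => (x i : H →L[ℂ] H)) k) :
    Tendsto (fun i => φ (x i)) atTop (𝓝 (φ k)) := by
  have hle : ∀ i, x i ≤ k := fun i =>
    hk.eventually_ge ((eventually_ge_atTop i).mono fun _ hij => hx hij)
  have hlub : IsLUB (Set.range fun i => φ (x i)) (φ k) :=
    hφ ι x k (fun i => (ContinuousLinearMap.nonneg_iff_isPositive _).1 (h0 i))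
      (fun i j hij => hx hij)
      ⟨‖k‖, fun i => CStarAlgebra.norm_le_norm_of_nonneg_of_le (h0 i) (hle i)⟩ hle
      fun y hy => hk.eventually_le (Eventually.of_forall hy)
  have hreal : ∀ {y : M}, 0 ≤ y → ((φ y).re : ℂ) = φ y := fun hy =>
    (Complex.eq_re_of_ofReal_le (φ.map_nonneg hy)).symm
  have hlubRe : IsLUB (Set.range fun i => (φ (x i)).re) (φ k).re := by
    refine ⟨Set.forall_mem_range.2 fun i => (Complex.le_def.1 (hlub.1 ⟨i, rfl⟩)).1, fun c hc => ?_⟩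
    refine (Complex.le_def.1 (hlub.2 (Set.forall_mem_range.2 fun i => ?_) : φ k ≤ c)).1
    rw [← hreal (h0 i)]
    exact Complex.real_le_real.2 (hc ⟨i, rfl⟩)
  have hmono : Monotone fun i => (φ (x i)).re := fun i j hij =>
    (Complex.le_def.1 (OrderHomClass.mono φ (hx hij))).1
  rw [← hreal ((h0 (Classical.arbitrary ι)).trans (hle _))]
  exact ((Complex.continuous_ofReal.tendsto _).comp (tendsto_atTop_isLUB hmono hlubRe)).congr
    fun i => hreal (h0 i)

theorem tendsto_map_of_antitone {φ : M →ₚ[ℂ] ℂ} (hφ : VNIsNormal φ.toLinearMap)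
    (hx : Antitone x) {c : M} (hc : ∀ i, x i ≤ c)
    (hk : TendstoWOT (fun i => (x i : H →L[ℂ] H)) k) :
    Tendsto (fun i => φ (x i)) atTop (𝓝 (φ k)) := by
  have h := tendsto_map_of_monotone hφ (x := fun i => c - x i) (k := c - k)
    (fun i j hij => sub_le_sub_left (hx hij) c) (fun i => sub_nonneg.2 (hc i)) (hk.const_sub c)
  simpa only [map_sub, sub_sub_cancel] using h.const_sub (φ c)

theorem tendsto_map_conj_of_antitone {φ : M →ₚ[ℂ] ℂ} (hφ : VNIsNormal φ.toLinearMap)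
    (hx : Antitone x) (h1 : ∀ i, x i ≤ 1)
    (hk : TendstoWOT (fun i => (x i : H →L[ℂ] H)) k) (w : M) :
    Tendsto (fun i => φ (w * x i * star w)) atTop (𝓝 (φ (w * k * star w))) :=
  tendsto_map_of_antitone hφ (fun _ _ hij => star_right_conjugate_le_conjugate (hx hij) w)
    (fun i => star_right_conjugate_le_conjugate (h1 i) w) (hk.mul_mul w (star w : M))

end Nets

theorem isStarProjection_of_sqrt_mul {z : M} (hz : 0 ≤ z) (h : CFC.sqrt z * z = CFC.sqrt z) :
    IsStarProjection z := by
  refine ⟨?_, hz.isSelfAdjoint⟩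
  calc z * z = CFC.sqrt z * (CFC.sqrt z * z) := by
        rw [← mul_assoc, CFC.sqrt_mul_sqrt_self z hz]
    _ = z := by rw [h, CFC.sqrt_mul_sqrt_self z hz]

/- `1 - z` is the weak limit of `(1 + x)⁻¹` along the directed set of all `x ≥ 0` with `φ x = 0`. -/
theorem exists_null_projection {φ : M →ₚ[ℂ] ℂ} (hφ : VNIsNormal φ.toLinearMap) :
    ∃ z : M, IsStarProjection z ∧ φ z = 0 ∧ ∀ y : M, φ (star y * y) = 0 → y * z = y := by
  let ι := {x : M // 0 ≤ x ∧ φ x = 0}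
  have : Nonempty ι := ⟨⟨0, le_rfl, map_zero φ⟩⟩
  have : IsDirected ι (· ≤ ·) := ⟨fun a b =>
    ⟨⟨a.1 + b.1, add_nonneg a.2.1 b.2.1, by rw [map_add, a.2.2, b.2.2, add_zero]⟩,
      (le_add_of_nonneg_right b.2.1 : a.1 ≤ a.1 + b.1),
      (le_add_of_nonneg_left a.2.1 : b.1 ≤ a.1 + b.1)⟩⟩
  let r : ι → M := fun i => (1 + i.1)⁻¹ʳ
  have hone : ∀ i : ι, 1 ≤ 1 + i.1 := fun i => le_add_of_nonneg_right i.2.1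
  have hanti : Antitone r := fun i j hij =>
    ringInverse_le_ringInverse_of_one_le (hone i) (by gcongr)
  have hr1 : ∀ i, r i ≤ 1 := fun i => ringInverse_le_one_of_one_le (hone i)
  have hr0 : ∀ i, 0 ≤ r i := fun i => ringInverse_nonneg_of_one_le (hone i)
  obtain ⟨k, hk⟩ := exists_mem_tendstoWOT_of_antitone hanti hr0
  have hk0 : 0 ≤ k := hk.eventually_ge (Eventually.of_forall hr0)
  have hk1 : k ≤ 1 := hk.eventually_le (Eventually.of_forall hr1)
  have hnull : φ (1 - k) = 0 := by
    have hconst : ∀ i, φ (r i) = φ 1 := fun i => by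
      have hle : 1 - r i ≤ i.1 := by
        simpa only [add_sub_cancel_left] using one_sub_ringInverse_le (hone i)
      have hnorm := norm_map_le_norm_map φ (sub_nonneg.2 (hr1 i)) hle
      rw [i.2.2, norm_zero, norm_le_zero_iff, map_sub, sub_eq_zero] at hnorm
      exact hnorm.symm
    have hlim := tendsto_map_of_antitone hφ hanti hr1 hk
    simp only [hconst] at hlim
    rw [map_sub, tendsto_nhds_unique tendsto_const_nhds hlim, sub_self]
  have hker : ∀ y : M, φ (star y * y) = 0 → y * (1 - k) = y := fun y hy => by
    have hyk : y * k = 0 := mul_eq_zero_of_le_kerApprox hk0 fun n => by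
      have hn : φ ((n : ℝ) • (star y * y)) = 0 := by
        rw [← Complex.coe_smul, map_smul, hy, smul_zero]
      exact hk.le_of_antitone hanti
        (⟨_, smul_nonneg n.cast_nonneg (star_mul_self_nonneg y), hn⟩ : ι)
    rw [mul_sub, hyk, mul_one, sub_zero]
  have hz0 : 0 ≤ 1 - k := sub_nonneg.2 hk1
  refine ⟨1 - k, isStarProjection_of_sqrt_mul hz0 (hker _ ?_), hnull, hker⟩
  rw [star_sqrt, CFC.sqrt_mul_sqrt_self _ hz0, hnull]

theorem kerApprox_apply_of_apply_eq_zero {b : M} {v : H} (hv : (b : H →L[ℂ] H) v = 0) (n : ℕ) :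
    ((kerApprox b n : M) : H →L[ℂ] H) v = v := by
  have hinv : (kerApprox b n * (1 + (n : ℝ) • (star b * b)) : M) = 1 :=
    ringInverse_mul_of_one_le (one_le_one_add_smul b n)
  have hfix : ((1 + (n : ℝ) • (star b * b) : M) : H →L[ℂ] H) v = v := by
    change v + (n : ℝ) • ((star b : M) : H →L[ℂ] H) ((b : H →L[ℂ] H) v) = v
    rw [hv, map_zero, smul_zero, add_zero]
  have happly := congrArg (fun T : M => (T : H →L[ℂ] H) v) hinv
  change ((kerApprox b n : M) : H →L[ℂ] H) (((1 + (n : ℝ) • (star b * b) : M) : H →L[ℂ] H) v) = v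
    at happly
  rwa [hfix] at happly

theorem mul_eq_self_of_apply_eq_self {b e y : M}
    (he : ∀ v, (b : H →L[ℂ] H) v = 0 → (e : H →L[ℂ] H) v = v) (hy : b * y = 0) : e * y = y :=
  Subtype.ext <| ContinuousLinearMap.ext fun v =>
    he _ (congrArg (fun T : M => (T : H →L[ℂ] H) v) hy)

theorem exists_ker_projection (b : M) :
    ∃ e : M, IsStarProjection e ∧ TendstoWOT (fun n => ((kerApprox b n : M) : H →L[ℂ] H)) e ∧
      b * e = 0 ∧ ∀ v, (b : H →L[ℂ] H) v = 0 → (e : H →L[ℂ] H) v = v := by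
  obtain ⟨e, hlim⟩ := exists_mem_tendstoWOT_of_antitone (antitone_kerApprox b) (kerApprox_nonneg b)
  have he0 : 0 ≤ e := hlim.eventually_ge (Eventually.of_forall (kerApprox_nonneg b))
  have hbe : b * e = 0 :=
    mul_eq_zero_of_le_kerApprox he0 (hlim.le_of_antitone (antitone_kerApprox b))
  have hfix : ∀ v, (b : H →L[ℂ] H) v = 0 → (e : H →L[ℂ] H) v = v := fun v hv => by
    refine ext_inner_right ℂ fun w => ?_
    have h := tendstoWOT_iff_inner.1 hlim v w
    simp only [kerApprox_apply_of_apply_eq_zero hv] at h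
    exact tendsto_nhds_unique h tendsto_const_nhds
  exact ⟨e, ⟨mul_eq_self_of_apply_eq_self hfix hbe, he0.isSelfAdjoint⟩, hlim, hbe, hfix⟩

theorem apply_eq_zero_imp_of_mul_eq_zero_imp {b : M} (hb : ∀ y : M, b * y = 0 → y = 0) {v : H}
    (hv : (b : H →L[ℂ] H) v = 0) : v = 0 := by
  obtain ⟨e, -, -, hbe, hfix⟩ := exists_ker_projection b
  rw [← hfix v hv, hb e hbe]
  rfl

theorem denseRange_of_isSelfAdjoint {H : Type*} [NormedAddCommGroup H] [InnerProductSpace ℂ H]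
    [CompleteSpace H] {D : H →L[ℂ] H} (hD : IsSelfAdjoint D) (hinj : ∀ v, D v = 0 → v = 0) :
    DenseRange D := by
  have horth := ContinuousLinearMap.orthogonal_ker D
  have hadj : ContinuousLinearMap.adjoint D = D := hD
  rw [LinearMap.ker_eq_bot'.2 hinj, hadj, Submodule.bot_orthogonal_eq_top] at horth
  exact Submodule.dense_iff_topologicalClosure_eq_top.2 horth.symm

theorem exists_isometry_mul_eq {S D : M} (hD : DenseRange (D : H →L[ℂ] H))
    (hnorm : ∀ v, ‖(S : H →L[ℂ] H) v‖ = ‖(D : H →L[ℂ] H) v‖) :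
    ∃ W : M, star W * W = 1 ∧ W * D = S := by
  let V : H →L[ℂ] H :=
    ((S : H →L[ℂ] H) : H →ₗ[ℂ] H).extendOfNorm ((D : H →L[ℂ] H) : H →ₗ[ℂ] H)
  have hVD : ∀ v, V ((D : H →L[ℂ] H) v) = (S : H →L[ℂ] H) v := fun v =>
    LinearMap.extendOfNorm_eq (f := ((S : H →L[ℂ] H) : H →ₗ[ℂ] H)) hD
      ⟨1, fun w => (hnorm w).le.trans_eq (one_mul _).symm⟩ v
  have hisometry : ∀ v, ‖V v‖ = ‖v‖ := fun v =>
    hD.induction_on (p := fun v => ‖V v‖ = ‖v‖) v (isClosed_eq (by fun_prop) (by fun_prop))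
      fun w => by rw [hVD, hnorm]
  have hVM : V ∈ M := by
    rw [← M.commutant_commutant, VonNeumannAlgebra.mem_commutant_iff]
    intro y hy
    have hcomm : ∀ (T : M) (v : H), (T : H →L[ℂ] H) (y v) = y ((T : H →L[ℂ] H) v) := fun T v =>
      congrArg (fun f : H →L[ℂ] H => f v) (VonNeumannAlgebra.mem_commutant_iff.1 hy T T.2)
    refine ContinuousLinearMap.ext fun v => hD.induction_on (p := fun v => y (V v) = V (y v)) v
      (isClosed_eq (by fun_prop) (by fun_prop)) fun w => ?_
    rw [hVD, ← hcomm, ← hcomm, hVD]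
  refine ⟨⟨V, hVM⟩, Subtype.ext ?_, Subtype.ext (ContinuousLinearMap.ext hVD)⟩
  exact (ContinuousLinearMap.norm_map_iff_adjoint_comp_self V).1 hisometry

theorem norm_apply_eq_of_star_mul_self_eq {S D : M} (h : star S * S = star D * D) (v : H) :
    ‖(S : H →L[ℂ] H) v‖ = ‖(D : H →L[ℂ] H) v‖ := by
  have hsq : ∀ T : M, (‖(T : H →L[ℂ] H) v‖ : ℂ) ^ 2 = ⟪((star T * T : M) : H →L[ℂ] H) v, v⟫_ℂ :=
    fun T => (inner_self_eq_norm_sq_to_K _).symm.trans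
      (ContinuousLinearMap.adjoint_inner_left (T : H →L[ℂ] H) v _).symm
  have heq := (hsq S).trans (h ▸ (hsq D).symm)
  rw [← sq_eq_sq₀ (norm_nonneg _) (norm_nonneg _)]
  exact_mod_cast heq

/- Finiteness makes the isometry in the polar decomposition of `star T` unitary. -/
theorem eq_zero_of_mul_eq_zero (hM : VNFinite M) {T : M} (hT : ∀ y : M, y * T = 0 → y = 0)
    {y : M} (hy : T * y = 0) : y = 0 := by
  have hstar : ∀ y : M, star T * y = 0 → y = 0 := fun y hy => by
    rw [← star_eq_zero]
    refine hT _ ?_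
    rw [← star_star T, ← star_mul, hy, star_zero]
  set D := CFC.sqrt (T * star T) with hDdef
  have hDD : star (star T) * star T = star D * D := by
    rw [star_star, star_sqrt, CFC.sqrt_mul_sqrt_self _ (mul_star_self_nonneg T)]
  have hnorm := norm_apply_eq_of_star_mul_self_eq hDD
  have hDinj : ∀ v, (D : H →L[ℂ] H) v = 0 → v = 0 := fun v hv => by
    refine apply_eq_zero_imp_of_mul_eq_zero_imp hstar (norm_eq_zero.1 ?_)
    rw [hnorm, hv, norm_zero]
  have hDsa : IsSelfAdjoint (D : H →L[ℂ] H) := congrArg Subtype.val (star_sqrt (T * star T))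
  obtain ⟨W, hW, hWD⟩ := exists_isometry_mul_eq (denseRange_of_isSelfAdjoint hDsa hDinj) hnorm
  have hTW : T = D * star W := by rw [← star_star T, ← hWD, star_mul, hDdef, star_sqrt]
  have hWy : star W * y = 0 := by
    refine Subtype.ext (ContinuousLinearMap.ext fun v => hDinj _ ?_)
    rw [hTW, mul_assoc] at hy
    exact congrArg (fun f : M => (f : H →L[ℂ] H) v) hy
  rw [← one_mul y, ← hM W hW, mul_assoc, hWy, mul_zero]

end VonNeumannAlgebra

section Regularizer

variable {A : Type*} [CStarAlgebra A]

/-- The partial sums `1 + ∑_{n < m} 4ⁿ dₙ⋆dₙ`, whose inverses decrease to the square of a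
regularizer of every functional that is small on all `dₙ⋆dₙ`. -/
noncomputable def regWeight (d : ℕ → A) (m : ℕ) : A :=
  1 + ∑ n ∈ Finset.range m, (4 : ℝ) ^ n • (star (d n) * d n)

theorem regWeight_mul_eq_self {d : ℕ → A} {z : A} (hz : ∀ n, d n * z = 0) (m : ℕ) :
    regWeight d m * z = z := by
  simp only [regWeight, add_mul, one_mul, Finset.sum_mul, smul_mul_assoc, mul_assoc, hz, mul_zero,
    smul_zero, Finset.sum_const_zero, add_zero]

variable [PartialOrder A]

theorem norm_map_regWeight_le (φ : A →ₚ[ℂ] ℂ) {d : ℕ → A}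
    (hd : ∀ n, ‖φ (star (d n) * d n)‖ ≤ (1 / 8) ^ n) (m : ℕ) :
    ‖φ (regWeight d m)‖ ≤ ‖φ 1‖ + 2 := by
  have hterm : ∀ n, ‖φ ((4 : ℝ) ^ n • (star (d n) * d n))‖ ≤ (1 / 2) ^ n := fun n => by
    rw [← Complex.coe_smul, map_smul, norm_smul, Complex.norm_of_nonneg (by positivity)]
    calc (4 : ℝ) ^ n * ‖φ (star (d n) * d n)‖ ≤ 4 ^ n * (1 / 8) ^ n := by gcongr; exact hd n
      _ = (1 / 2) ^ n := by rw [← mul_pow]; norm_num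
  rw [regWeight, map_add, map_sum]
  exact (norm_add_le _ _).trans (add_le_add le_rfl
    ((norm_sum_le_of_le _ fun n _ => hterm n).trans (sum_geometric_two_le m)))

/-- Right multiplication by `s` regularizes the functional `φ`: a sequence `aₙ` with `aₙ s → 0` in
norm also satisfies `φ (aₙ⋆aₙ) → 0`. Stated as the one inequality from which everything else about
`s` follows. -/
structure IsRegularizer (φ : A →ₚ[ℂ] ℂ) (s : A) (C : ℝ) : Prop where
  nonneg : 0 ≤ C
  norm_map_sq_le : ∀ w, ‖φ w‖ ^ 2 ≤ C * ‖φ (w * s * star (w * s))‖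

variable [StarOrderedRing A]

theorem regWeight_term_nonneg (d : ℕ → A) (n : ℕ) : 0 ≤ (4 : ℝ) ^ n • (star (d n) * d n) :=
  smul_nonneg (by positivity) (star_mul_self_nonneg _)

theorem one_le_regWeight (d : ℕ → A) (m : ℕ) : 1 ≤ regWeight d m :=
  le_add_of_nonneg_right (Finset.sum_nonneg fun n _ => regWeight_term_nonneg d n)

theorem monotone_regWeight (d : ℕ → A) : Monotone (regWeight d) :=
  monotone_nat_of_le_succ fun m => by
    rw [regWeight, regWeight, Finset.sum_range_succ, ← add_assoc]
    exact le_add_of_nonneg_right (regWeight_term_nonneg d m)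

theorem smul_le_regWeight_succ (d : ℕ → A) (n : ℕ) :
    (4 : ℝ) ^ n • (star (d n) * d n) ≤ regWeight d (n + 1) :=
  (Finset.single_le_sum (fun i _ => regWeight_term_nonneg d i)
    (Finset.self_mem_range_succ n)).trans (le_add_of_nonneg_left zero_le_one)

namespace IsRegularizer

variable {φ : A →ₚ[ℂ] ℂ} {s b : A} {C : ℝ} {a : ℕ → A}

theorem norm_map_star_mul_self_le (hs : IsRegularizer φ s C) (a : A) :
    ‖φ (star a * a)‖ ≤ C * ‖a * s‖ ^ 2 := by
  have hconj := norm_map_conj_le φ (mul_star_self_nonneg (a * s)) a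
  rw [CStarRing.norm_self_mul_star, ← pow_two] at hconj
  have hsq : ‖φ (star a * a)‖ * ‖φ (star a * a)‖ ≤ C * ‖a * s‖ ^ 2 * ‖φ (star a * a)‖ := calc
    _ ≤ C * ‖φ (star a * (a * s * star (a * s)) * a)‖ := by
      simpa only [star_mul, star_star, mul_assoc, pow_two] using hs.norm_map_sq_le (star a * a)
    _ ≤ C * (‖a * s‖ ^ 2 * ‖φ (star a * a)‖) := mul_le_mul_of_nonneg_left hconj hs.nonneg
    _ = _ := (mul_assoc _ _ _).symm
  rcases (norm_nonneg (φ (star a * a))).eq_or_lt with h0 | hpos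
  · rw [← h0]
    exact mul_nonneg hs.nonneg (sq_nonneg _)
  · exact le_of_mul_le_mul_right hsq hpos

theorem tendsto_map_star_mul_self (hs : IsRegularizer φ s C)
    (ha : Tendsto (fun n => a n * s) atTop (𝓝 0)) :
    Tendsto (fun n => φ (star (a n) * a n)) atTop (𝓝 0) := by
  refine squeeze_zero_norm (fun n => hs.norm_map_star_mul_self_le (a n)) ?_
  simpa only [norm_zero, zero_pow two_ne_zero, mul_zero] using (ha.norm.pow 2).const_mul C

theorem norm_map_sq_le_sub (hs : IsRegularizer φ s C)
    (hb : Tendsto (fun n => a n * s) atTop (𝓝 b))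
    (ha : Tendsto (fun n => φ (star (a n) * a n)) atTop (𝓝 0)) (x c : A) :
    ‖φ x‖ ^ 2 ≤ C * ‖φ ((x * s - c * b) * star (x * s - c * b))‖ := by
  have hca : Tendsto (fun n => φ (c * a n)) atTop (𝓝 0) := by
    have hsqrt := (ha.norm.const_mul ‖φ (c * star c)‖).sqrt
    rw [norm_zero, mul_zero, Real.sqrt_zero] at hsqrt
    refine squeeze_zero_norm (fun n => Real.le_sqrt_of_sq_le ?_) hsqrt
    simpa only [star_star] using norm_map_star_mul_sq_le φ (star c) (a n)
  have hleft : Tendsto (fun n => ‖φ (x - c * a n)‖ ^ 2) atTop (𝓝 (‖φ x‖ ^ 2)) := by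
    simpa only [map_sub, sub_zero] using ((hca.const_sub (φ x)).norm.pow 2)
  have hmul : Tendsto (fun n => (x - c * a n) * s) atTop (𝓝 (x * s - c * b)) := by
    simpa only [sub_mul, mul_assoc] using (hb.const_mul c).const_sub (x * s)
  have hright := ((((map_continuous φ).tendsto _).comp (hmul.mul hmul.star)).norm).const_mul C
  exact le_of_tendsto_of_tendsto' hleft hright fun n => hs.norm_map_sq_le _

/- Take `c` with `x * s - c * b = x * s * kerApprox b n`. -/
theorem norm_map_sq_le_kerApprox (hs : IsRegularizer φ s C)
    (hb : Tendsto (fun n => a n * s) atTop (𝓝 b))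
    (ha : Tendsto (fun n => φ (star (a n) * a n)) atTop (𝓝 0)) (x : A) (n : ℕ) :
    ‖φ x‖ ^ 2 ≤ C * ‖φ (x * s * kerApprox b n * star (x * s))‖ := by
  have h := hs.norm_map_sq_le_sub hb ha x (x * s * ((n : ℝ) • (kerApprox b n * star b)))
  rw [mul_assoc _ _ b, smul_kerApprox_mul, mul_sub, mul_one, sub_sub_cancel] at h
  refine h.trans (mul_le_mul_of_nonneg_left
    (norm_map_le_norm_map φ (mul_star_self_nonneg _) ?_) hs.nonneg)
  have hconj := star_right_conjugate_le_conjugate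
    (mul_self_le_self (kerApprox_nonneg b n) (kerApprox_le_one b n)) (x * s)
  simpa only [star_mul, (kerApprox_nonneg b n).isSelfAdjoint.star_eq, mul_assoc] using hconj

end IsRegularizer

end Regularizer

section Closability

variable {H : Type} [NormedAddCommGroup H] [InnerProductSpace ℂ H] [CompleteSpace H]
variable {M : VonNeumannAlgebra H}

theorem isRegularizer_sqrt {φ : M →ₚ[ℂ] ℂ} (hφ : VNIsNormal φ.toLinearMap) {h : ℕ → M}
    (h1 : ∀ m, 1 ≤ h m) (hmono : Monotone h) {C : ℝ} (hC : ∀ m, ‖φ (h m)‖ ≤ C) {k : M} (hk : 0 ≤ k)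
    (hlim : TendstoWOT (fun m => (((h m)⁻¹ʳ : M) : H →L[ℂ] H)) k) :
    IsRegularizer φ (CFC.sqrt k) C := by
  refine ⟨(norm_nonneg _).trans (hC 0), fun w => ?_⟩
  have htendsto := tendsto_map_conj_of_antitone hφ
    (fun i j hij => ringInverse_le_ringInverse_of_one_le (h1 i) (hmono hij))
    (fun m => ringInverse_le_one_of_one_le (h1 m)) hlim w
  rw [mul_sqrt_mul_star hk]
  refine ge_of_tendsto' (htendsto.norm.const_mul C) fun m => ?_
  calc ‖φ w‖ ^ 2 ≤ ‖φ (w * (h m)⁻¹ʳ * star w)‖ * ‖φ (h m)‖ :=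
        norm_map_sq_le_conj_ringInverse φ (h1 m) w
    _ ≤ C * ‖φ (w * (h m)⁻¹ʳ * star w)‖ := by
        rw [mul_comm C]
        exact mul_le_mul_of_nonneg_left (hC m) (norm_nonneg _)

theorem exists_isRegularizer (d : ℕ → M) :
    ∃ s : M, star s = s ∧ (∀ n, ‖d n * s‖ ≤ (1 / 2) ^ n) ∧
      (∀ z, (∀ n, d n * z = 0) → s * z = z) ∧
      ∀ φ : M →ₚ[ℂ] ℂ, VNIsNormal φ.toLinearMap →
        (∀ n, ‖φ (star (d n) * d n)‖ ≤ (1 / 8) ^ n) → IsRegularizer φ s (‖φ 1‖ + 2) := by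
  have h1 := one_le_regWeight d
  have hanti : Antitone fun m => (regWeight d m)⁻¹ʳ := fun i j hij =>
    ringInverse_le_ringInverse_of_one_le (h1 i) (monotone_regWeight d hij)
  have hinv := fun m => ringInverse_nonneg_of_one_le (h1 m)
  obtain ⟨k, hlim⟩ := exists_mem_tendstoWOT_of_antitone hanti hinv
  have hk : 0 ≤ k := hlim.eventually_ge (Eventually.of_forall hinv)
  refine ⟨CFC.sqrt k, star_sqrt k, fun n => ?_, fun z hz => sqrt_mul_eq_self hk ?_,
    fun φ hφ hd => isRegularizer_sqrt hφ h1 (monotone_regWeight d) (norm_map_regWeight_le φ hd)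
      hk hlim⟩
  · rw [← sq_le_sq₀ (norm_nonneg _) (by positivity), norm_mul_sqrt_sq hk, ← pow_mul, mul_comm n,
      pow_mul, div_pow, one_pow, div_pow, one_pow, le_div_iff₀ (by positivity), mul_comm]
    norm_num only
    exact mul_norm_conj_le_one (by positivity) (h1 (n + 1)) (smul_le_regWeight_succ d n) hk
      (hlim.le_of_antitone hanti (n + 1))
  · have hleft := hlim.mul_mul 1 (z : H →L[ℂ] H)
    have hfix : ∀ m, (((regWeight d m)⁻¹ʳ : M) * z : H →L[ℂ] H) = z := fun m =>
      congrArg Subtype.val (ringInverse_mul_eq_self (h1 m) (regWeight_mul_eq_self hz m))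
    simp only [one_mul, hfix] at hleft
    exact Subtype.ext (hleft.unique (tendstoWOT_const _))

theorem IsRegularizer.map_eq_zero_of_mul_eq_zero {φ : M →ₚ[ℂ] ℂ} {s b e : M} {C : ℝ} {a : ℕ → M}
    (hs : IsRegularizer φ s C) (hφ : VNIsNormal φ.toLinearMap)
    (hb : Tendsto (fun n => a n * s) atTop (𝓝 b))
    (ha : Tendsto (fun n => φ (star (a n) * a n)) atTop (𝓝 0))
    (he : TendstoWOT (fun n => ((kerApprox b n : M) : H →L[ℂ] H)) e) {x : M}
    (hx : x * s * e = 0) : φ x = 0 := by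
  have hlim := ((tendsto_map_conj_of_antitone hφ (antitone_kerApprox b) (kerApprox_le_one b) he
    (x * s)).norm).const_mul C
  rw [hx, zero_mul, map_zero, norm_zero, mul_zero] at hlim
  have hsq := ge_of_tendsto' hlim (hs.norm_map_sq_le_kerApprox hb ha x)
  exact norm_eq_zero.1 (pow_eq_zero_iff two_ne_zero |>.1 (hsq.antisymm (sq_nonneg _)))

theorem tendsto_mul_zero_of_isRegularizer (hM : VNFinite M) {φ : M →ₚ[ℂ] ℂ}
    (hφ : VNIsNormal φ.toLinearMap) {z s : M} (hz : IsSelfAdjoint z)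
    (hnull : ∀ y : M, φ (star y * y) = 0 → y * z = y) {C : ℝ} (hs : IsRegularizer φ s C)
    (hstar : star s = s) (hsz : s * z = z) {a : ℕ → M} (haz : ∀ n, a n * z = 0)
    (hcauchy : CauchySeq fun n => a n * s)
    (ha : Tendsto (fun n => φ (star (a n) * a n)) atTop (𝓝 0)) :
    Tendsto (fun n => a n * s) atTop (𝓝 0) := by
  obtain ⟨b, hb⟩ := cauchySeq_tendsto_of_complete hcauchy
  obtain ⟨e, heproj, he, hbe, hfix⟩ := exists_ker_projection b
  have hbz : b * z = 0 := by
    have hlim := hb.mul_const z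
    simp only [mul_assoc, hsz, haz] at hlim
    exact tendsto_nhds_unique hlim tendsto_const_nhds
  have hzs : z * s = z := by simpa only [star_mul, hstar, hz.star_eq] using congrArg star hsz
  have hze : z * e = z := by
    simpa only [star_mul, heproj.isSelfAdjoint.star_eq, hz.star_eq] using
      congrArg star (mul_eq_self_of_apply_eq_self hfix hbz)
  have hinj : ∀ y : M, y * (s * e) = 0 → y = 0 := fun y hy => by
    have hφy : φ (star y * y) = 0 := hs.map_eq_zero_of_mul_eq_zero hφ hb ha he <| by
      rw [mul_assoc, mul_assoc, hy, mul_zero]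
    calc y = y * z * (s * e) := by rw [mul_assoc, ← mul_assoc z, hzs, hze, hnull y hφy]
      _ = 0 := by rw [hnull y hφy, hy]
  have he1 : 1 - e = 0 := eq_zero_of_mul_eq_zero hM hinj <| by
    rw [mul_assoc, heproj.isIdempotentElem.mul_one_sub_self, mul_zero]
  rwa [← mul_one b, sub_eq_zero.1 he1, hbe] at hb

theorem tendsto_map_star_mul_self_of_left_kernel_subset (hM : VNFinite M) {f g : M →ₚ[ℂ] ℂ}
    (hf : VNIsNormal f.toLinearMap) (hg : VNIsNormal g.toLinearMap)
    (hker : ∀ y : M, g (star y * y) = 0 → f (star y * y) = 0) {a : ℕ → M}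
    (hdf : ∀ n, ‖f (star (a (n + 1) - a n) * (a (n + 1) - a n))‖ ≤ (1 / 8) ^ n)
    (hdg : ∀ n, ‖g (star (a (n + 1) - a n) * (a (n + 1) - a n))‖ ≤ (1 / 8) ^ n)
    (hga : Tendsto (fun n => g (star (a n) * a n)) atTop (𝓝 0)) :
    Tendsto (fun n => f (star (a n) * a n)) atTop (𝓝 0) := by
  obtain ⟨z, hz, hgz, hnull⟩ := exists_null_projection hg
  have hzz : star z * z = z := by rw [hz.isSelfAdjoint.star_eq, hz.isIdempotentElem.eq]
  have hgzz : g (star z * z) = 0 := by rw [hzz, hgz]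
  have hfcompl := map_star_mul_self_mul_one_sub f (hker z hgzz)
  have hgcompl := map_star_mul_self_mul_one_sub g hgzz
  have hcompl : ∀ x : M, x * (1 - z) * z = 0 := fun x => by
    rw [mul_assoc, hz.isIdempotentElem.one_sub_mul_self, mul_zero]
  obtain ⟨s, hstar, hnorm, hfix, hreg⟩ :=
    exists_isRegularizer fun n => (a (n + 1) - a n) * (1 - z)
  have hsz : s * z = z := hfix z fun n => hcompl _
  have hcauchy : CauchySeq fun n => a n * (1 - z) * s :=
    cauchySeq_of_le_geometric (1 / 2) 1 (by norm_num) fun n => by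
      rw [dist_comm, dist_eq_norm, ← sub_mul, ← sub_mul, one_mul]
      exact hnorm n
  have hregf := hreg f hf fun n => by rw [hfcompl]; exact hdf n
  have hregg := hreg g hg fun n => by rw [hgcompl]; exact hdg n
  have hlim := tendsto_mul_zero_of_isRegularizer hM hg hz.isSelfAdjoint hnull hregg hstar hsz
    (fun n => hcompl (a n)) hcauchy (by simpa only [hgcompl] using hga)
  simpa only [hfcompl] using hregf.tendsto_map_star_mul_self hlim

end Closability

section PowersOfContractions

theorem sub_pow_succ_le {A : Type*} [CStarAlgebra A] [PartialOrder A] [StarOrderedRing A] {T : A}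
    (h0 : 0 ≤ T) (h1 : T ≤ 1) (n : ℕ) : T - T ^ (n + 1) ≤ n • (1 - T) := by
  induction n with
  | zero => simp only [zero_add, pow_one, sub_self, zero_smul, le_refl]
  | succ n ih =>
    have hpow : T ^ (n + 1) ≤ 1 := pow_zero T ▸ CStarAlgebra.pow_antitone h0 h1 (n + 1).zero_le
    have hstep : 0 ≤ (1 - T ^ (n + 1)) * (1 - T) :=
      Commute.mul_nonneg (sub_nonneg.2 hpow) (sub_nonneg.2 h1)
        ((Commute.one_left _).sub_left
          (((Commute.one_right T).sub_right (Commute.refl T)).pow_left _))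
    calc T - T ^ (n + 1 + 1) = T - T ^ (n + 1) + (1 - T) - (1 - T ^ (n + 1)) * (1 - T) := by
          rw [pow_succ]; noncomm_ring
      _ ≤ T - T ^ (n + 1) + (1 - T) := sub_le_self _ hstep
      _ ≤ n • (1 - T) + (1 - T) := add_le_add_left ih _
      _ = (n + 1) • (1 - T) := (succ_nsmul _ _).symm

theorem tendstoWOT_pow_zero {K : Type*} [NormedAddCommGroup K] [InnerProductSpace ℂ K]
    [CompleteSpace K] {T : K →L[ℂ] K} (h0 : 0 ≤ T) (h1 : T ≤ 1) (hfix : ∀ v, T v = v → v = 0) :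
    TendstoWOT (fun n : ℕ => T ^ n) 0 := by
  obtain ⟨E, hE⟩ := exists_tendstoWOT_of_antitone (CStarAlgebra.pow_antitone h0 h1)
    fun n => CStarAlgebra.pow_nonneg h0 n
  have hTE : T * E = E := by
    refine TendstoWOT.unique (x := fun n : ℕ => T * T ^ n) ?_ ?_
    · simpa only [mul_one] using hE.mul_mul T 1
    · exact (Tendsto.comp hE (tendsto_add_atTop_nat 1)).congr fun n => by
        simp only [Function.comp_apply, pow_succ']
  have hE0 : E = 0 := ContinuousLinearMap.ext fun v => hfix _ (DFunLike.congr_fun hTE v)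
  exact hE0 ▸ hE

end PowersOfContractions

section GNS

variable {A : Type*} [CStarAlgebra A] [PartialOrder A] [StarOrderedRing A]

/-- The canonical map `Λ` from the algebra to the GNS space of `φ`, with dense range. -/
noncomputable def gnsVec (φ : A →ₚ[ℂ] ℂ) : A →ₗ[ℂ] φ.GNS :=
  (UniformSpace.Completion.toComplL (𝕜 := ℂ) (E := φ.PreGNS)).toLinearMap ∘ₗ
    φ.toPreGNS.toLinearMap

/-- The commutant of the GNS representation of `φ`. -/
noncomputable def gnsCommutant (φ : A →ₚ[ℂ] ℂ) : Subalgebra ℂ (φ.GNS →L[ℂ] φ.GNS) :=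
  Subalgebra.centralizer ℂ (Set.range φ.gnsStarAlgHom)

/-- The functional `x ↦ ⟪Λ 1, B (Λ x)⟫` attached to an operator `B` on the GNS space of `φ`. On
the commutant of the GNS representation this correspondence preserves positivity. -/
noncomputable def gnsFunctional (φ : A →ₚ[ℂ] ℂ) : (φ.GNS →L[ℂ] φ.GNS) →ₗ[ℂ] A →ₗ[ℂ] ℂ :=
  LinearMap.mk₂ ℂ (fun B x => ⟪gnsVec φ 1, B (gnsVec φ x)⟫_ℂ)
    (fun B C x => inner_add_right _ _ _) (fun c B x => inner_smul_right _ _ _)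
    (fun B x y => by rw [map_add, map_add, inner_add_right])
    (fun c B x => by rw [map_smul, map_smul, inner_smul_right, smul_eq_mul])

/-- The Radon–Nikodym density of `f` with respect to `φ`: for `f ≤ φ` it is the operator `T` on
the GNS space of `φ` with `⟪Λ x, T (Λ y)⟫ = f (x⋆ y)`. It is built as `V⋆ V`, where `V` is the
contraction between the two GNS spaces that extends the identity of the algebra; without `f ≤ φ`
it may be a junk value. -/
noncomputable def gnsDensity (φ f : A →ₚ[ℂ] ℂ) : φ.GNS →L[ℂ] φ.GNS :=
  ContinuousLinearMap.adjoint ((gnsVec f).extendOfNorm (gnsVec φ)) ∘L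
    (gnsVec f).extendOfNorm (gnsVec φ)

variable (φ : A →ₚ[ℂ] ℂ)

theorem denseRange_gnsVec : DenseRange (gnsVec φ) :=
  UniformSpace.Completion.denseRange_coe.comp φ.toPreGNS.surjective.denseRange
    (UniformSpace.Completion.continuous_coe _)

theorem inner_gnsVec (x y : A) : ⟪gnsVec φ x, gnsVec φ y⟫_ℂ = φ (star x * y) :=
  UniformSpace.Completion.inner_coe _ _

theorem norm_gnsVec_sq (x : A) : ‖gnsVec φ x‖ ^ 2 = ‖φ (star x * x)‖ := by
  rw [← inner_gnsVec, inner_self_eq_norm_sq_to_K, norm_pow, RCLike.norm_ofReal, abs_norm]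

theorem gnsStarAlgHom_gnsVec (x y : A) :
    φ.gnsStarAlgHom x (gnsVec φ y) = gnsVec φ (x * y) :=
  φ.gnsNonUnitalStarAlgHom_apply_coe

theorem gnsFunctional_apply (B : φ.GNS →L[ℂ] φ.GNS) (x : A) :
    gnsFunctional φ B x = ⟪gnsVec φ 1, B (gnsVec φ x)⟫_ℂ := rfl

theorem gnsFunctional_one : gnsFunctional φ 1 = φ.toLinearMap :=
  LinearMap.ext fun x => (inner_gnsVec φ 1 x).trans (by rw [star_one, one_mul]; rfl)

theorem nonneg_of_inner_gnsVec {B : φ.GNS →L[ℂ] φ.GNS}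
    (hB : ∀ x, 0 ≤ ⟪B (gnsVec φ x), gnsVec φ x⟫_ℂ) : 0 ≤ B :=
  (nonneg_iff_inner_nonneg B).2 fun v => (denseRange_gnsVec φ).induction_on
    (p := fun v => 0 ≤ ⟪B v, v⟫_ℂ) v (isClosed_le continuous_const (by fun_prop)) hB

variable {φ}

theorem gnsFunctional_star_mul_self {B : φ.GNS →L[ℂ] φ.GNS} (hB : B ∈ gnsCommutant φ) (x : A) :
    gnsFunctional φ B (star x * x) = ⟪gnsVec φ x, B (gnsVec φ x)⟫_ℂ := by
  have hcomm : φ.gnsStarAlgHom (star x) * B = B * φ.gnsStarAlgHom (star x) :=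
    Subalgebra.mem_centralizer_iff ℂ |>.1 hB _ ⟨star x, rfl⟩
  calc gnsFunctional φ B (star x * x)
      = ⟪gnsVec φ 1, (B * φ.gnsStarAlgHom (star x)) (gnsVec φ x)⟫_ℂ := by
        rw [gnsFunctional_apply, ← gnsStarAlgHom_gnsVec, mul_apply_eq_comp]
    _ = ⟪gnsVec φ 1, ContinuousLinearMap.adjoint (φ.gnsStarAlgHom x) (B (gnsVec φ x))⟫_ℂ := by
        rw [← hcomm, map_star]; rfl
    _ = ⟪gnsVec φ x, B (gnsVec φ x)⟫_ℂ := by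
        rw [ContinuousLinearMap.adjoint_inner_right, gnsStarAlgHom_gnsVec, mul_one]

theorem gnsFunctional_star_mul_self_nonneg {B : φ.GNS →L[ℂ] φ.GNS} (hB : B ∈ gnsCommutant φ)
    (h0 : 0 ≤ B) (x : A) : 0 ≤ gnsFunctional φ B (star x * x) := by
  rw [gnsFunctional_star_mul_self hB, ← ContinuousLinearMap.adjoint_inner_left,
    ← ContinuousLinearMap.star_eq_adjoint, (IsSelfAdjoint.of_nonneg h0).star_eq]
  exact (nonneg_iff_inner_nonneg B).1 h0 _

theorem tendsto_gnsFunctional {ι : Type*} [Preorder ι] {B : ι → φ.GNS →L[ℂ] φ.GNS}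
    {C : φ.GNS →L[ℂ] φ.GNS} (h : TendstoWOT B C) (x : A) :
    Tendsto (fun i => gnsFunctional φ (B i) x) atTop (𝓝 (gnsFunctional φ C x)) :=
  ContinuousLinearMapWOT.tendsto_iff_forall_inner_apply_tendsto.1 h _ _

theorem exists_gnsVec_tendsto (κ : φ.GNS) : ∃ a : ℕ → A,
    Tendsto (fun n => gnsVec φ (a n)) atTop (𝓝 κ) ∧
    ∀ n, ‖φ (star (a (n + 1) - a n) * (a (n + 1) - a n))‖ ≤ (1 / 8) ^ n := by
  choose a ha using fun n : ℕ =>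
    (denseRange_gnsVec φ).exists_dist_lt κ (show (0 : ℝ) < (1 / 4) ^ n / 2 by positivity)
  refine ⟨a, tendsto_iff_dist_tendsto_zero.2 (squeeze_zero (g := fun n : ℕ => (1 / 4 : ℝ) ^ n / 2)
    (fun n => dist_nonneg) (fun n => (dist_comm _ _).trans_le (ha n).le) ?_), fun n => ?_⟩
  · simpa using (tendsto_pow_atTop_nhds_zero_of_lt_one (r := (1 / 4 : ℝ)) (by norm_num)
      (by norm_num)).div_const 2
  · have hdist : ‖gnsVec φ (a (n + 1) - a n)‖ ≤ (1 / 4) ^ n := by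
      rw [map_sub, ← dist_eq_norm]
      have htri := dist_triangle_left (gnsVec φ (a (n + 1))) (gnsVec φ (a n)) κ
      have hpow : (1 / 4 : ℝ) ^ (n + 1) ≤ (1 / 4) ^ n :=
        pow_le_pow_of_le_one (by norm_num) (by norm_num) n.le_succ
      linarith [ha n, ha (n + 1)]
    calc ‖φ (star (a (n + 1) - a n) * (a (n + 1) - a n))‖
        = ‖gnsVec φ (a (n + 1) - a n)‖ ^ 2 := (norm_gnsVec_sq φ _).symm
      _ ≤ ((1 / 4) ^ n) ^ 2 := pow_le_pow_left₀ (norm_nonneg _) hdist 2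
      _ = (1 / 16) ^ n := by rw [pow_right_comm]; norm_num
      _ ≤ (1 / 8) ^ n := pow_le_pow_left₀ (by norm_num) (by norm_num) n

section Density

variable {f : A →ₚ[ℂ] ℂ} (hle : ∀ x, f (star x * x) ≤ φ (star x * x))
include hle

theorem inner_gnsDensity (x y : A) :
    ⟪gnsVec φ x, gnsDensity φ f (gnsVec φ y)⟫_ℂ = f (star x * y) := by
  have hnorm : ∀ x, ‖gnsVec f x‖ ≤ 1 * ‖gnsVec φ x‖ := fun x => by
    rw [one_mul, ← sq_le_sq₀ (norm_nonneg _) (norm_nonneg _), norm_gnsVec_sq, norm_gnsVec_sq]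
    exact CStarAlgebra.norm_le_norm_of_nonneg_of_le (f.map_nonneg (star_mul_self_nonneg x)) (hle x)
  have hV := LinearMap.extendOfNorm_eq (denseRange_gnsVec φ) ⟨1, hnorm⟩
  rw [gnsDensity, ContinuousLinearMap.comp_apply, ContinuousLinearMap.adjoint_inner_right, hV, hV,
    inner_gnsVec]

theorem gnsFunctional_gnsDensity : gnsFunctional φ (gnsDensity φ f) = f.toLinearMap :=
  LinearMap.ext fun x => (inner_gnsDensity hle 1 x).trans (by rw [star_one, one_mul]; rfl)

theorem gnsDensity_le_one : gnsDensity φ f ≤ 1 := by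
  rw [← sub_nonneg]
  refine nonneg_of_inner_gnsVec φ fun x => ?_
  rw [← inner_conj_symm, sub_apply, one_apply_eq_self, inner_sub_right, inner_gnsVec,
    inner_gnsDensity hle]
  exact star_nonneg_iff.2 (sub_nonneg.2 (hle x))

theorem gnsDensity_mem_gnsCommutant : gnsDensity φ f ∈ gnsCommutant φ := by
  refine (Subalgebra.mem_centralizer_iff ℂ).2 ?_
  rintro _ ⟨x, rfl⟩
  refine DFunLike.coe_injective ((denseRange_gnsVec φ).equalizer (map_continuous _)
    (map_continuous _) (funext fun y => (denseRange_gnsVec φ).eq_of_inner_right ℂ fun w => ?_))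
  calc ⟪gnsVec φ w, φ.gnsStarAlgHom x (gnsDensity φ f (gnsVec φ y))⟫_ℂ
      = ⟪φ.gnsStarAlgHom (star x) (gnsVec φ w), gnsDensity φ f (gnsVec φ y)⟫_ℂ := by
        rw [map_star, ContinuousLinearMap.star_eq_adjoint, ContinuousLinearMap.adjoint_inner_left]
    _ = f (star (star x * w) * y) := by rw [gnsStarAlgHom_gnsVec, inner_gnsDensity hle]
    _ = f (star w * (x * y)) := by rw [star_mul, star_star, mul_assoc]
    _ = ⟪gnsVec φ w, gnsDensity φ f (φ.gnsStarAlgHom x (gnsVec φ y))⟫_ℂ := by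
        rw [gnsStarAlgHom_gnsVec, inner_gnsDensity hle]

end Density

theorem gnsDensity_nonneg (φ f : A →ₚ[ℂ] ℂ) : 0 ≤ gnsDensity φ f :=
  (ContinuousLinearMap.nonneg_iff_isPositive _).2
    (ContinuousLinearMap.isPositive_adjoint_comp_self _)

theorem map_star_mul_self_le_add (f g : A →ₚ[ℂ] ℂ) (x : A) :
    f (star x * x) ≤ (f + g) (star x * x) :=
  le_add_of_nonneg_right (g.map_nonneg (star_mul_self_nonneg x))

theorem gnsFunctional_one_sub_gnsDensity (f g : A →ₚ[ℂ] ℂ) :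
    gnsFunctional (f + g) (1 - gnsDensity (f + g) f) = g.toLinearMap := by
  rw [map_sub, gnsFunctional_one, gnsFunctional_gnsDensity (map_star_mul_self_le_add f g)]
  exact add_sub_cancel_left f.toLinearMap g.toLinearMap

end GNS

section AbsoluteContinuity

variable {H : Type} [NormedAddCommGroup H] [InnerProductSpace ℂ H] [CompleteSpace H]
variable {M : VonNeumannAlgebra H}

theorem isNormal_of_le {p f : M →ₗ[ℂ] ℂ} (hp : VNIsPos p) (hle : VNLE p f) (hf : VNIsNormal f) :
    VNIsNormal p := by
  intro ι _ _ _ x k h0 hmono hbdd hk hlub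
  obtain ⟨p, rfl⟩ := exists_positiveLinearMap hp
  obtain ⟨q, hq⟩ := exists_positiveLinearMap hle
  have hx : ∀ i, x i ≤ k := hk
  have hf_lub := hf ι x k h0 hmono hbdd hk hlub
  obtain rfl : f = p.toLinearMap + q.toLinearMap := by rw [hq, add_sub_cancel]
  refine ⟨?_, fun u hu => ?_⟩
  · rintro _ ⟨i, rfl⟩
    exact OrderHomClass.mono p (hx i)
  · refine le_of_add_le_add_right (hf_lub.2 ?_ : p k + q k ≤ u + q k)
    rintro _ ⟨i, rfl⟩
    exact add_le_add (hu ⟨i, rfl⟩) (OrderHomClass.mono q (hx i))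

theorem le_gnsFunctional {φ : M →ₚ[ℂ] ℂ} {B C : φ.GNS →L[ℂ] φ.GNS} (hB : B ∈ gnsCommutant φ)
    (hC : C ∈ gnsCommutant φ) (h : B ≤ C) : VNLE (gnsFunctional φ B) (gnsFunctional φ C) := by
  rw [VNLE, ← map_sub]
  exact gnsFunctional_star_mul_self_nonneg (sub_mem hC hB) (sub_nonneg.2 h)

theorem absCont_of_gnsFunctional_eq {φ : M →ₚ[ℂ] ℂ} {T : φ.GNS →L[ℂ] φ.GNS}
    (hT : T ∈ gnsCommutant φ) (h0 : 0 ≤ T) (h1 : T ≤ 1) (hfix : ∀ v, T v = v → v = 0)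
    {f g : M →ₗ[ℂ] ℂ} (hfT : gnsFunctional φ T = f) (hgT : gnsFunctional φ (1 - T) = g)
    (hf : VNIsNormal f) : VNAbsCont f g := by
  subst hfT hgT
  have hpow := CStarAlgebra.pow_antitone h0 h1
  have hmem : ∀ n, T - T ^ (n + 2) ∈ gnsCommutant φ := fun n =>
    sub_mem hT (pow_mem hT _)
  have hpos : ∀ n, VNIsPos (gnsFunctional φ (T - T ^ (n + 2))) := fun n =>
    gnsFunctional_star_mul_self_nonneg (hmem n)
      (sub_nonneg.2 ((hpow (Nat.le_add_left 1 (n + 1))).trans_eq (pow_one T)))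
  have hle : ∀ n, VNLE (gnsFunctional φ (T - T ^ (n + 2))) (gnsFunctional φ T) := fun n =>
    le_gnsFunctional (hmem n) hT (sub_le_self _ (CStarAlgebra.pow_nonneg h0 _))
  have hdom : ∀ n, VNLE (gnsFunctional φ (T - T ^ (n + 2)))
      ((((n + 1 : ℕ) : ℝ) : ℂ) • gnsFunctional φ (1 - T)) := fun n => by
    rw [Complex.ofReal_natCast, Nat.cast_smul_eq_nsmul, ← map_nsmul]
    exact le_gnsFunctional (hmem n) (nsmul_mem (sub_mem (one_mem _) hT) _)
      (sub_pow_succ_le h0 h1 (n + 1))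
  have hlim : TendstoWOT (fun n => T - T ^ (n + 2)) T := by
    simpa only [TendstoWOT, sub_zero, Function.comp_def] using
      Tendsto.comp ((tendstoWOT_pow_zero h0 h1 hfix).const_sub T) (tendsto_add_atTop_nat 2)
  exact ⟨fun n => gnsFunctional φ (T - T ^ (n + 2)), fun n => ((n + 1 : ℕ) : ℝ),
    fun n => ⟨hpos n, isNormal_of_le (hpos n) (hle n) hf⟩, fun n => Nat.cast_pos.2 n.succ_pos,
    fun n => le_gnsFunctional (hmem n) (hmem (n + 1)) (sub_le_sub_left (hpow (n + 2).le_succ) T),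
    hdom, tendsto_gnsFunctional hlim⟩

variable {f g : M →ₚ[ℂ] ℂ}

theorem eq_zero_of_gnsDensity_apply_eq_self (hM : VNFinite M) (hf : VNIsNormal f.toLinearMap)
    (hg : VNIsNormal g.toLinearMap)
    (hker : ∀ y : M, g (star y * y) = 0 → f (star y * y) = 0) {κ : (f + g).GNS}
    (hκ : gnsDensity (f + g) f κ = κ) : κ = 0 := by
  obtain ⟨a, ha, hda⟩ := exists_gnsVec_tendsto κ
  have hfle := map_star_mul_self_le_add f g
  have hgle : ∀ x, g (star x * x) ≤ (f + g) (star x * x) := fun x =>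
    le_add_of_nonneg_left (f.map_nonneg (star_mul_self_nonneg x))
  have hlim_f : Tendsto (fun n => f (star (a n) * a n)) atTop (𝓝 ⟪κ, κ⟫_ℂ) := by
    have hT := ha.inner (𝕜 := ℂ) (((gnsDensity (f + g) f).continuous.tendsto κ).comp ha)
    rw [hκ] at hT
    exact hT.congr fun n => inner_gnsDensity hfle _ _
  have hlim_g : Tendsto (fun n => g (star (a n) * a n)) atTop (𝓝 0) := by
    have hsub := (ha.inner (𝕜 := ℂ) ha).sub hlim_f
    rw [sub_self] at hsub
    exact hsub.congr fun n => by
      rw [inner_gnsVec, PositiveLinearMap.add_apply, add_sub_cancel_left]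
  have hlim_f_zero := tendsto_map_star_mul_self_of_left_kernel_subset hM hf hg hker
    (fun n => (CStarAlgebra.norm_le_norm_of_nonneg_of_le
      (f.map_nonneg (star_mul_self_nonneg _)) (hfle _)).trans (hda n))
    (fun n => (CStarAlgebra.norm_le_norm_of_nonneg_of_le
      (g.map_nonneg (star_mul_self_nonneg _)) (hgle _)).trans (hda n)) hlim_g
  exact inner_self_eq_zero.1 (tendsto_nhds_unique hlim_f hlim_f_zero)

theorem absCont_of_left_kernel_subset (hM : VNFinite M) (hf : VNIsNormal f.toLinearMap)
    (hg : VNIsNormal g.toLinearMap)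
    (hker : ∀ y : M, g (star y * y) = 0 → f (star y * y) = 0) :
    VNAbsCont f.toLinearMap g.toLinearMap :=
  absCont_of_gnsFunctional_eq (gnsDensity_mem_gnsCommutant (map_star_mul_self_le_add f g))
    (gnsDensity_nonneg _ _) (gnsDensity_le_one (map_star_mul_self_le_add f g))
    (fun _ => eq_zero_of_gnsDensity_apply_eq_self hM hf hg hker)
    (gnsFunctional_gnsDensity (map_star_mul_self_le_add f g))
    (gnsFunctional_one_sub_gnsDensity f g) hf

end AbsoluteContinuity

end VNAbsCont

/-- **Lemma 2.10**: on a finite von Neumann algebra `M`, if the left kernels of the normal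
positive functionals `𝔣, 𝔤` satisfy `L_𝔤 ⊆ L_𝔣`, then `𝔣 ≪ 𝔤`. -/
theorem vN_finite_absCont_of_leftKernel_subset
    {H : Type} [NormedAddCommGroup H] [InnerProductSpace ℂ H] [CompleteSpace H]
    (M : VonNeumannAlgebra H) (hM : VNFinite M)
    (𝔣 𝔤 : ↥M →ₗ[ℂ] ℂ)
    (h𝔣p : VNIsPos 𝔣) (h𝔣n : VNIsNormal 𝔣)
    (h𝔤p : VNIsPos 𝔤) (h𝔤n : VNIsNormal 𝔤)
    (hker : {a : ↥M | 𝔤 (star a * a) = 0} ⊆ {a : ↥M | 𝔣 (star a * a) = 0}) :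
    VNAbsCont 𝔣 𝔤 := by
  obtain ⟨f, rfl⟩ := VNAbsCont.exists_positiveLinearMap h𝔣p
  obtain ⟨g, rfl⟩ := VNAbsCont.exists_positiveLinearMap h𝔤p
  exact VNAbsCont.absCont_of_left_kernel_subset hM h𝔣n h𝔤n fun _ hy => hker hy
end

section
/- If M is a finite von Neumann algebra, then the Lebesgue decomposition of normal positive functionals over M is unique. -/
open scoped ComplexOrder

/-!
Write `‖x‖_f = f (x⋆ * x) ^ (1 / 2)`. If `s ⊥ g`, then in the direct sum of the GNS spaces of `s`
and `g` the cyclic vector of `s` lies in the cyclic subspace generated by the sum of the two cyclic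
vectors, which means that there are `x k` in `M` with `‖x k‖_g` and `‖1 - x k‖_s` as small as we
like. The strong limit `R` of the resolvents of the partial sums of `∑ 2 ^ k • x k⋆ * x k`, and
similarly `S` for `1 - x k`, are positive, `g` and `s` vanish on the respective kernel projections,
and `x k * R → 0`, `(1 - x k) * S → 0` strongly. Hence `R` and `S` have disjoint ranges.

Finiteness of `M` forces the kernel projections of such `R` and `S` to have supremum `1`. Otherwise
there are `r ≥ 0` and `a ≠ 0` with disjoint ranges such that the closure of the range of `r`
contains that of `a`. For disjoint spectral bands `e j` of `r` near `0` the operators `e j * a` have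
orthogonal ranges, and large multiples `v j` of them satisfy `q * (v j⋆ * v j) * q ≥ q / 3` for a
common projection `q ≠ 0`. Their polar decompositions yield infinitely many equivalent orthogonal
projections, and shifting along these is a non-unitary isometry in `M`.

So for every `ε > 0` there is `y` with `‖y‖_g = 0` and `‖1 - y‖_s < ε`. Functionals absolutely
continuous with respect to `g` also vanish on `y⋆ * y`, whence comparing two decompositions
`r + s = r' + s'` at `x * (1 - y)` gives `r ≤ r'`, and equality by symmetry.
-/

open scoped InnerProductSpace

namespace VNLebesgue

section Resolvents

open Ring

variable {A : Type*} [CStarAlgebra A] [PartialOrder A] [StarOrderedRing A]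

lemma isUnit_one_add {a : A} (ha : 0 ≤ a) : IsUnit (1 + a) :=
  CStarAlgebra.isUnit_of_le 1 (le_add_of_nonneg_right ha)

lemma inverse_one_add_nonneg {a : A} (ha : 0 ≤ a) : 0 ≤ (1 + a)⁻¹ʳ :=
  (CFC.ringInverse_nonneg_iff_nonneg_of_isUnit (isUnit_one_add ha)).2
    (add_nonneg zero_le_one ha)

lemma inverse_one_add_le_inverse_one_add {a b : A} (ha : 0 ≤ a) (hab : a ≤ b) :
    (1 + b)⁻¹ʳ ≤ (1 + a)⁻¹ʳ := by
  have : IsStrictlyPositive (1 + a) := by grind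
  gcongr

lemma inverse_one_add_le_one {a : A} (ha : 0 ≤ a) : (1 + a)⁻¹ʳ ≤ 1 := by
  simpa using inverse_one_add_le_inverse_one_add le_rfl ha

lemma norm_inverse_one_add_le {a : A} (ha : 0 ≤ a) : ‖(1 + a)⁻¹ʳ‖ ≤ 1 :=
  (CStarAlgebra.norm_le_one_iff_of_nonneg _ (inverse_one_add_nonneg ha)).2
    (inverse_one_add_le_one ha)

lemma inverse_one_add_mul_self {a : A} (ha : 0 ≤ a) : (1 + a)⁻¹ʳ * a = 1 - (1 + a)⁻¹ʳ := by
  have h := inverse_mul_cancel _ (isUnit_one_add ha)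
  rw [mul_add, mul_one] at h
  exact eq_sub_of_add_eq' h

lemma self_mul_inverse_one_add {a : A} (ha : 0 ≤ a) : a * (1 + a)⁻¹ʳ = 1 - (1 + a)⁻¹ʳ := by
  have h := mul_inverse_cancel _ (isUnit_one_add ha)
  rw [add_mul, one_mul] at h
  exact eq_sub_of_add_eq' h

lemma inverse_one_add_sub_inverse_one_add {a b : A} (ha : 0 ≤ a) (hb : 0 ≤ b) :
    (1 + a)⁻¹ʳ - (1 + b)⁻¹ʳ = (1 + a)⁻¹ʳ * (b - a) * (1 + b)⁻¹ʳ := by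
  rw [mul_sub, sub_mul, mul_assoc, self_mul_inverse_one_add hb, inverse_one_add_mul_self ha]
  noncomm_ring

lemma one_sub_le_inverse_one_add {a : A} (ha : 0 ≤ a) : 1 - a ≤ (1 + a)⁻¹ʳ := by
  have h : a * (1 + a)⁻¹ʳ * a = (1 + a)⁻¹ʳ - (1 - a) := by
    rw [self_mul_inverse_one_add ha, sub_mul, one_mul, inverse_one_add_mul_self ha]
    abel
  rw [← sub_nonneg, ← h]
  exact ha.isSelfAdjoint.conjugate_nonneg (inverse_one_add_nonneg ha)

lemma inverse_one_add_le_one_sub_half {a : A} (ha : 0 ≤ a) (ha' : a ≤ 1) :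
    (1 + a)⁻¹ʳ ≤ 1 - (2⁻¹ : ℝ) • a := by
  have hcomm : Commute (a * (1 + a)⁻¹ʳ) (1 - a) := by
    refine (Commute.one_right _).sub_right ?_
    rw [self_mul_inverse_one_add ha, commute_iff_eq, sub_mul, mul_sub,
      self_mul_inverse_one_add ha, inverse_one_add_mul_self ha, one_mul, mul_one]
  have hnn : 0 ≤ a * (1 + a)⁻¹ʳ := by
    rw [self_mul_inverse_one_add ha]
    exact sub_nonneg.2 (inverse_one_add_le_one ha)
  have h : (2⁻¹ : ℝ) • (a * (1 + a)⁻¹ʳ * (1 - a)) = 1 - (2⁻¹ : ℝ) • a - (1 + a)⁻¹ʳ := by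
    rw [self_mul_inverse_one_add ha, mul_sub, mul_one, sub_mul, one_mul,
      inverse_one_add_mul_self ha]
    module
  rw [← sub_nonneg, ← h]
  exact smul_nonneg (by norm_num) (hcomm.mul_nonneg hnn (sub_nonneg.2 ha'))

lemma two_smul_inverse_one_add_inverse_one_add_sub_one_le {a : A} (ha : 0 ≤ a) :
    (2 : ℝ) • (1 + (1 + a)⁻¹ʳ)⁻¹ʳ - 1 ≤ a := calc
  (2 : ℝ) • (1 + (1 + a)⁻¹ʳ)⁻¹ʳ - 1 ≤ (2 : ℝ) • (1 - (2⁻¹ : ℝ) • (1 + a)⁻¹ʳ) - 1 := by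
    gcongr
    exact inverse_one_add_le_one_sub_half (inverse_one_add_nonneg ha) (inverse_one_add_le_one ha)
  _ = 1 - (1 + a)⁻¹ʳ := by module
  _ ≤ a := sub_le_comm.1 (one_sub_le_inverse_one_add ha)

lemma mul_sq_norm_mul_inverse_one_add_le {x a : A} {c : ℝ} (hc : 0 ≤ c)
    (h : c • (star x * x) ≤ a) : c * ‖x * (1 + a)⁻¹ʳ‖ ^ 2 ≤ 1 := by
  have hx : 0 ≤ c • (star x * x) := smul_nonneg hc (star_mul_self_nonneg x)
  have ha : 0 ≤ a := hx.trans h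
  set r := (1 + a)⁻¹ʳ with hr
  have hr0 : 0 ≤ r := inverse_one_add_nonneg ha
  have hle : c • (star (x * r) * (x * r)) ≤ 1 := calc
    c • (star (x * r) * (x * r)) = r * (c • (star x * x)) * r := by
      rw [star_mul, hr0.star_eq, mul_smul_comm, smul_mul_assoc]
      simp only [mul_assoc]
    _ ≤ r * a * r := hr0.isSelfAdjoint.conjugate_le_conjugate h
    _ = r - r * r := by rw [hr, inverse_one_add_mul_self ha, ← hr, sub_mul, one_mul]
    _ ≤ 1 := sub_le_self _ (hr0.isSelfAdjoint.mul_self_nonneg) |>.trans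
      (inverse_one_add_le_one ha)
  have hnorm := (CStarAlgebra.norm_le_one_iff_of_nonneg _
    (smul_nonneg hc (star_mul_self_nonneg (x * r)))).2 hle
  rwa [norm_smul, Real.norm_of_nonneg hc, CStarRing.norm_star_mul_self, ← sq] at hnorm

lemma two_mul_smul_le {p a : A} (hp : IsSelfAdjoint p) (ha : 0 ≤ a) (t : ℝ) :
    (2 * t) • p ≤ t ^ 2 • (p * (1 + a)⁻¹ʳ * p) + (1 + a) := by
  have hsa : IsSelfAdjoint (t • p - (1 + a)) :=
    ((IsSelfAdjoint.all t).smul hp).sub ((IsSelfAdjoint.one A).add ha.isSelfAdjoint)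
  have h : (t • p - (1 + a)) * (1 + a)⁻¹ʳ * (t • p - (1 + a)) =
      t ^ 2 • (p * (1 + a)⁻¹ʳ * p) + (1 + a) - (2 * t) • p := by
    rw [sub_mul _ (1 + a), mul_inverse_cancel _ (isUnit_one_add ha), sub_mul, one_mul, mul_sub,
      mul_assoc (t • p) _ (1 + a), inverse_mul_cancel _ (isUnit_one_add ha)]
    simp only [smul_mul_assoc, mul_smul_comm, mul_one]
    module
  rw [← sub_nonneg, ← h]
  exact hsa.conjugate_nonneg (inverse_one_add_nonneg ha)

end Resolvents

section GNS
variable {A : Type*} [CStarAlgebra A] {K : Type*} [NormedAddCommGroup K] [InnerProductSpace ℂ K]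

lemma norm_apply_starProjection_orthogonal_le {Γ : Submodule ℂ K} [Γ.HasOrthogonalProjection]
    {T : K →L[ℂ] K} (hΓ : ∀ v ∈ Γ, T v ∈ Γ) (hΓ' : ∀ v ∈ Γᗮ, T v ∈ Γᗮ) (v : K) :
    ‖T (Γᗮ.starProjection v)‖ ≤ ‖T v‖ := by
  have hv : T v = T (Γ.starProjection v) + T (Γᗮ.starProjection v) := by
    rw [← map_add, Γ.starProjection_add_starProjection_orthogonal]
  have hsq := norm_add_sq_eq_norm_sq_add_norm_sq_of_inner_eq_zero _ _
    (Submodule.inner_right_of_mem_orthogonal (hΓ _ (Γ.starProjection_apply_mem v))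
      (hΓ' _ (Γᗮ.starProjection_apply_mem v)))
  rw [← hv] at hsq
  nlinarith [mul_self_nonneg ‖T (Γ.starProjection v)‖, norm_nonneg (T v)]

variable [CompleteSpace K]

lemma inner_map_star_mul_self (π : A →⋆ₐ[ℂ] (K →L[ℂ] K)) (ξ : K) (b : A) :
    ⟪ξ, π (star b * b) ξ⟫_ℂ = (‖π b ξ‖ ^ 2 : ℝ) := by
  rw [map_mul, map_star, ContinuousLinearMap.star_eq_adjoint,
    ContinuousLinearMap.mul_def, ContinuousLinearMap.comp_apply,
    ContinuousLinearMap.adjoint_inner_right, inner_self_eq_norm_sq_to_K]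
  norm_cast

/-- The closure of the orbit `{π a ξ | a : A}`: the cyclic subspace of the representation `π`
generated by `ξ`. -/
noncomputable def cyclicSubspace (π : A →⋆ₐ[ℂ] (K →L[ℂ] K)) (ξ : K) : Submodule ℂ K :=
  ((ContinuousLinearMap.apply ℂ K ξ).toLinearMap ∘ₗ
    π.toAlgHom.toLinearMap).range.topologicalClosure

lemma mem_cyclicSubspace_iff {π : A →⋆ₐ[ℂ] (K →L[ℂ] K)} {ξ v : K} :
    v ∈ cyclicSubspace π ξ ↔ v ∈ closure (Set.range fun a => π a ξ) := Iff.rfl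

lemma map_mem_cyclicSubspace (π : A →⋆ₐ[ℂ] (K →L[ℂ] K)) (ξ : K) (a : A) {v : K}
    (hv : v ∈ cyclicSubspace π ξ) : π a v ∈ cyclicSubspace π ξ := by
  rw [mem_cyclicSubspace_iff] at hv ⊢
  refine map_mem_closure (π a).continuous hv ?_
  rintro _ ⟨b, rfl⟩
  exact ⟨a * b, by simp⟩

lemma map_mem_orthogonal_cyclicSubspace (π : A →⋆ₐ[ℂ] (K →L[ℂ] K)) (ξ : K) (a : A) {v : K}
    (hv : v ∈ (cyclicSubspace π ξ)ᗮ) : π a v ∈ (cyclicSubspace π ξ)ᗮ := by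
  refine (Submodule.mem_orthogonal _ _).2 fun u hu => ?_
  rw [← ContinuousLinearMap.adjoint_inner_left, ← ContinuousLinearMap.star_eq_adjoint, ← map_star]
  exact (Submodule.mem_orthogonal _ _).1 hv _ (map_mem_cyclicSubspace π ξ (star a) hu)

variable [PartialOrder A] [StarOrderedRing A]

/-- The positive functional `a ↦ ⟪ξ, π a ξ⟫` induced by a vector `ξ` in a representation `π`. -/
noncomputable def vectorFunctional (π : A →⋆ₐ[ℂ] (K →L[ℂ] K)) (ξ : K) : A →ₚ[ℂ] ℂ :=
  .mk₀ ((innerSL ℂ ξ).toLinearMap ∘ₗ (ContinuousLinearMap.apply ℂ K ξ).toLinearMap ∘ₗ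
    π.toAlgHom.toLinearMap) fun a ha => by
      obtain ⟨b, rfl⟩ := CStarAlgebra.nonneg_iff_eq_star_mul_self.1 ha
      exact (Complex.zero_le_real.2 (sq_nonneg _)).trans_eq (inner_map_star_mul_self π ξ b).symm

lemma vectorFunctional_star_mul_self (π : A →⋆ₐ[ℂ] (K →L[ℂ] K)) (ξ : K) (b : A) :
    vectorFunctional π ξ (star b * b) = (‖π b ξ‖ ^ 2 : ℝ) :=
  inner_map_star_mul_self π ξ b

/-- The projection of `ξ` onto the orthogonal complement of the cyclic subspace of `ξ + η` is
minus that of `η`, so it induces a common minorant of the functionals of `ξ` and `η`. -/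
lemma mem_cyclicSubspace_add {π : A →⋆ₐ[ℂ] (K →L[ℂ] K)} {ξ η : K}
    (h : ∀ p : A →ₚ[ℂ] ℂ, (∀ b, p (star b * b) ≤ vectorFunctional π ξ (star b * b)) →
      (∀ b, p (star b * b) ≤ vectorFunctional π η (star b * b)) → p = 0) :
    ξ ∈ cyclicSubspace π (ξ + η) := by
  set Γ := cyclicSubspace π (ξ + η)
  have : CompleteSpace Γ := (Submodule.isClosed_topologicalClosure _).completeSpace_coe
  have hq (b : A) (v : K) : ‖π b (Γᗮ.starProjection v)‖ ≤ ‖π b v‖ :=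
    norm_apply_starProjection_orthogonal_le (fun _ => map_mem_cyclicSubspace π _ b)
      (fun _ => map_mem_orthogonal_cyclicSubspace π _ b) v
  have hsum : ξ + η ∈ Γ := mem_cyclicSubspace_iff.2 (subset_closure ⟨1, by simp⟩)
  have hneg : Γᗮ.starProjection ξ = -Γᗮ.starProjection η := by
    rw [← add_eq_zero_iff_eq_neg, ← map_add,
      Submodule.starProjection_orthogonal_apply_eq_zero hsum]
  have hp := h (vectorFunctional π (Γᗮ.starProjection ξ))
    (fun b => by simpa only [vectorFunctional_star_mul_self, Complex.real_le_real] using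
      pow_le_pow_left₀ (norm_nonneg _) (hq b ξ) 2)
    (fun b => by simpa only [vectorFunctional_star_mul_self, Complex.real_le_real, hneg, map_neg,
      norm_neg] using pow_le_pow_left₀ (norm_nonneg _) (hq b η) 2)
  have hzero : Γᗮ.starProjection ξ = 0 := by
    have h1 := vectorFunctional_star_mul_self π (Γᗮ.starProjection ξ) 1
    rw [hp, PositiveLinearMap.zero_apply, map_one, eq_comm, Complex.ofReal_eq_zero,
      sq_eq_zero_iff, norm_eq_zero] at h1
    exact h1
  rw [← Γ.orthogonal_orthogonal]
  exact (Submodule.starProjection_apply_eq_zero_iff _).1 hzero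

/-- The functional `(a, b) ↦ s a + g b` on `A × A`, whose GNS space is the orthogonal sum of those
of `s` and `g`. -/
noncomputable def prodFunctional (s g : A →ₚ[ℂ] ℂ) : A × A →ₚ[ℂ] ℂ :=
  .mk₀ (s.toLinearMap ∘ₗ .fst ℂ A A + g.toLinearMap ∘ₗ .snd ℂ A A) fun _ ha =>
    add_nonneg (s.map_nonneg ha.1) (g.map_nonneg ha.2)

lemma norm_sq_toPreGNS_prodFunctional (s g : A →ₚ[ℂ] ℂ) (a b : A) :
    ‖(prodFunctional s g).toPreGNS (a, b)‖ ^ 2 = ‖s.toPreGNS a‖ ^ 2 + ‖g.toPreGNS b‖ ^ 2 := by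
  rw [← Complex.ofReal_inj]
  push_cast
  simp only [PositiveLinearMap.preGNS_norm_sq]
  rfl

/-- The diagonal representation of `A` on the GNS space of `prodFunctional s g`. -/
noncomputable def diagonalRep (s g : A →ₚ[ℂ] ℂ) :
    A →⋆ₐ[ℂ] ((prodFunctional s g).GNS →L[ℂ] (prodFunctional s g).GNS) :=
  (prodFunctional s g).gnsStarAlgHom.comp ((StarAlgHom.id ℂ A).prod (StarAlgHom.id ℂ A))

lemma diagonalRep_apply_coe (s g : A →ₚ[ℂ] ℂ) (a b c : A) :
    diagonalRep s g a ((prodFunctional s g).toPreGNS (b, c) : (prodFunctional s g).GNS) =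
      ((prodFunctional s g).toPreGNS (a * b, a * c) : (prodFunctional s g).GNS) :=
  PositiveLinearMap.gnsNonUnitalStarAlgHom_apply_coe _

lemma exists_norm_toPreGNS_lt {s g : A →ₚ[ℂ] ℂ}
    (h : ∀ p : A →ₚ[ℂ] ℂ, (∀ b, p (star b * b) ≤ s (star b * b)) →
      (∀ b, p (star b * b) ≤ g (star b * b)) → p = 0) {ε : ℝ} (hε : 0 < ε) :
    ∃ x, ‖g.toPreGNS x‖ < ε ∧ ‖s.toPreGNS (1 - x)‖ < ε := by
  set φ := prodFunctional s g
  have hξ (b : A) : vectorFunctional (diagonalRep s g) ↑(φ.toPreGNS (1, 0)) (star b * b) =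
      s (star b * b) := by
    rw [vectorFunctional_star_mul_self, diagonalRep_apply_coe,
      UniformSpace.Completion.norm_coe, norm_sq_toPreGNS_prodFunctional]
    simp [PositiveLinearMap.preGNS_norm_sq]
  have hη (b : A) : vectorFunctional (diagonalRep s g) ↑(φ.toPreGNS (0, 1)) (star b * b) =
      g (star b * b) := by
    rw [vectorFunctional_star_mul_self, diagonalRep_apply_coe,
      UniformSpace.Completion.norm_coe, norm_sq_toPreGNS_prodFunctional]
    simp [PositiveLinearMap.preGNS_norm_sq]
  have hmem : (φ.toPreGNS (1, 0) : φ.GNS) ∈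
      cyclicSubspace (diagonalRep s g) (φ.toPreGNS (1, 0) + φ.toPreGNS (0, 1)) :=
    mem_cyclicSubspace_add (by simpa only [hξ, hη] using h)
  obtain ⟨_, ⟨x, rfl⟩, hx⟩ := Metric.mem_closure_iff.1 (mem_cyclicSubspace_iff.1 hmem) ε hε
  have hdist : ‖φ.toPreGNS (1 - x, -x)‖ < ε := by
    rw [← UniformSpace.Completion.coe_add, ← map_add, Prod.mk_add_mk, add_zero, zero_add] at hx
    beta_reduce at hx
    rw [diagonalRep_apply_coe, UniformSpace.Completion.dist_eq, dist_eq_norm, ← map_sub,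
      Prod.mk_sub_mk, mul_one, zero_sub] at hx
    exact hx
  have hsq := norm_sq_toPreGNS_prodFunctional s g (1 - x) (-x)
  rw [map_neg, norm_neg] at hsq
  have hle {t : ℝ} (ht : 0 ≤ t) (h : t ^ 2 ≤ ‖φ.toPreGNS (1 - x, -x)‖ ^ 2) : t < ε :=
    ((pow_le_pow_iff_left₀ ht (norm_nonneg _) two_ne_zero).1 h).trans_lt hdist
  exact ⟨x, hle (norm_nonneg _) (hsq ▸ le_add_of_nonneg_left (sq_nonneg _)),
    hle (norm_nonneg _) (hsq ▸ le_add_of_nonneg_right (sq_nonneg _))⟩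

end GNS

section Operators

variable {H : Type} [NormedAddCommGroup H] [InnerProductSpace ℂ H] [CompleteSpace H]

lemma isClosed_coe (M : VonNeumannAlgebra H) : IsClosed (M : Set (H →L[ℂ] H)) := by
  rw [← M.centralizer_centralizer]
  exact Set.isClosed_centralizer _

noncomputable instance (M : VonNeumannAlgebra H) : CStarAlgebra M :=
  StarSubalgebra.cstarAlgebra M (h_closed := isClosed_coe M)

lemma mem_of_forall_commute {M : VonNeumannAlgebra H} {a : H →L[ℂ] H}
    (h : ∀ y ∈ M.commutant, Commute a y) : a ∈ M := by
  rw [← M.commutant_commutant, VonNeumannAlgebra.mem_commutant_iff]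
  exact fun y hy => (h y hy).symm

lemma commute_of_mem_commutant {M : VonNeumannAlgebra H} {a y : H →L[ℂ] H} (ha : a ∈ M)
    (hy : y ∈ M.commutant) : Commute a y :=
  VonNeumannAlgebra.mem_commutant_iff.1 hy a ha

/-- `M` carries the Loewner order of `H →L[ℂ] H`; its positive elements have square roots
in `M` because the continuous functional calculus commutes with the commutant. -/
instance (M : VonNeumannAlgebra H) : StarOrderedRing M :=
  .of_nonneg_iff' (fun h z => add_le_add_right (α := H →L[ℂ] H) h z) fun x => by
    refine ⟨fun hx => ?_, ?_⟩
    · have hx' : 0 ≤ (x : H →L[ℂ] H) := hx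
      refine ⟨⟨CFC.sqrt (x : H →L[ℂ] H), mem_of_forall_commute fun y hy =>
        (commute_of_mem_commutant x.2 hy).cfcₙ_nnreal _⟩, Subtype.ext ?_⟩
      change (x : H →L[ℂ] H) = star (CFC.sqrt (x : H →L[ℂ] H)) * CFC.sqrt (x : H →L[ℂ] H)
      rw [(CFC.sqrt_nonneg _).star_eq, CFC.sqrt_mul_sqrt_self _ hx']
    · rintro ⟨s, rfl⟩
      exact star_mul_self_nonneg (s : H →L[ℂ] H)

end Operators

section PositiveOperators

open Filter

variable {H : Type*} [NormedAddCommGroup H] [InnerProductSpace ℂ H]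

lemma re_inner_apply_nonneg {a : H →L[ℂ] H} (ha : 0 ≤ a) (ξ : H) : 0 ≤ (⟪a ξ, ξ⟫_ℂ).re :=
  ((ContinuousLinearMap.nonneg_iff_isPositive a).1 ha).re_inner_nonneg_left ξ

lemma re_inner_apply_mono {a b : H →L[ℂ] H} (hab : a ≤ b) (ξ : H) :
    (⟪a ξ, ξ⟫_ℂ).re ≤ (⟪b ξ, ξ⟫_ℂ).re := by
  have hpos : (b - a).IsPositive := hab
  simpa [inner_sub_left] using hpos.re_inner_nonneg_left ξ

lemma nonneg_of_forall_inner_apply_nonneg {a : H →L[ℂ] H} (h : ∀ ξ, 0 ≤ ⟪a ξ, ξ⟫_ℂ) :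
    0 ≤ a := by
  rw [ContinuousLinearMap.nonneg_iff_isPositive, ContinuousLinearMap.isPositive_iff_complex]
  intro ξ
  obtain ⟨hre, him⟩ := Complex.nonneg_iff.1 (h ξ)
  exact ⟨Complex.ext rfl him, hre⟩

variable [CompleteSpace H]

lemma inner_star_apply_left (a : H →L[ℂ] H) (ξ η : H) : ⟪(star a) ξ, η⟫_ℂ = ⟪ξ, a η⟫_ℂ := by
  rw [ContinuousLinearMap.star_eq_adjoint, ContinuousLinearMap.adjoint_inner_left]

lemma norm_sq_apply_eq_re_inner (a : H →L[ℂ] H) (ξ : H) :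
    ‖a ξ‖ ^ 2 = (⟪(star a * a) ξ, ξ⟫_ℂ).re := by
  rw [mul_apply_eq_comp, inner_star_apply_left, inner_self_eq_norm_sq_to_K]
  norm_cast

lemma norm_sq_apply_le_of_nonneg {a : H →L[ℂ] H} (ha : 0 ≤ a) (ξ : H) :
    ‖a ξ‖ ^ 2 ≤ ‖a‖ * (⟪a ξ, ξ⟫_ℂ).re := by
  set s := CFC.sqrt a
  have hss : s * s = a := CFC.sqrt_mul_sqrt_self _ ha
  have hsa : star s = s := (CFC.sqrt_nonneg a).star_eq
  calc ‖a ξ‖ ^ 2 = ‖s (s ξ)‖ ^ 2 := by rw [← mul_apply_eq_comp, hss]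
    _ ≤ (‖s‖ * ‖s ξ‖) ^ 2 := by gcongr; exact s.le_opNorm _
    _ = ‖star s * s‖ * (⟪(star s * s) ξ, ξ⟫_ℂ).re := by
      rw [mul_pow, norm_sq_apply_eq_re_inner, CStarRing.norm_star_mul_self, sq]
    _ = ‖a‖ * (⟪a ξ, ξ⟫_ℂ).re := by rw [hsa, hss]

lemma cauchySeq_apply_of_antitone {x : ℕ → H →L[ℂ] H} (hx : ∀ n, 0 ≤ x n) (hanti : Antitone x)
    (ξ : H) : CauchySeq fun n => x n ξ := by
  set u : ℕ → ℝ := fun n => (⟪x n ξ, ξ⟫_ℂ).re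
  have hu : CauchySeq u :=
    (tendsto_atTop_ciInf (fun i j hij => re_inner_apply_mono (hanti hij) ξ)
      ⟨0, Set.forall_mem_range.2 fun n => re_inner_apply_nonneg (hx n) ξ⟩).cauchySeq
  have hsub : ∀ i j, i ≤ j → ‖x i ξ - x j ξ‖ ^ 2 ≤ ‖x 0‖ * (u i - u j) := fun i j hij => calc
    ‖x i ξ - x j ξ‖ ^ 2 ≤ ‖x i - x j‖ * (⟪(x i - x j) ξ, ξ⟫_ℂ).re :=
      norm_sq_apply_le_of_nonneg (sub_nonneg.2 (hanti hij)) ξ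
    _ ≤ ‖x 0‖ * (⟪(x i - x j) ξ, ξ⟫_ℂ).re := by
      gcongr
      · exact re_inner_apply_nonneg (sub_nonneg.2 (hanti hij)) ξ
      · exact CStarAlgebra.norm_le_norm_of_nonneg_of_le (sub_nonneg.2 (hanti hij))
          ((sub_le_self _ (hx j)).trans (hanti (Nat.zero_le i)))
    _ = ‖x 0‖ * (u i - u j) := by simp [u]
  have hdist : ∀ i j, ‖x i ξ - x j ξ‖ ^ 2 ≤ ‖x 0‖ * |u i - u j| := fun i j => by
    rcases le_total i j with h | h
    · exact (hsub i j h).trans (by gcongr; exact le_abs_self _)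
    · rw [norm_sub_rev, abs_sub_comm]
      exact (hsub j i h).trans (by gcongr; exact le_abs_self _)
  rw [Metric.cauchySeq_iff] at hu ⊢
  intro ε hε
  obtain ⟨N, hN⟩ := hu (ε ^ 2 / (‖x 0‖ + 1)) (by positivity)
  refine ⟨N, fun m hm n hn => lt_of_pow_lt_pow_left₀ 2 hε.le ?_⟩
  have hlt := hN m hm n hn
  rw [Real.dist_eq, lt_div_iff₀ (by positivity)] at hlt
  rw [dist_eq_norm]
  nlinarith [hdist m n, abs_nonneg (u m - u n)]

end PositiveOperators

section StrongLimits

open Filter Topology Ring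

variable {H : Type} [NormedAddCommGroup H] [InnerProductSpace ℂ H] [CompleteSpace H]
  {M : VonNeumannAlgebra H}

lemma re_inner_coe_apply_mono {a b : M} (hab : a ≤ b) (ξ : H) :
    (⟪a.1 ξ, ξ⟫_ℂ).re ≤ (⟪b.1 ξ, ξ⟫_ℂ).re :=
  re_inner_apply_mono (a := a.1) (b := b.1) hab ξ

/-- Convergence of a sequence of `M` in the strong operator topology. -/
def TendstoStrongly (x : ℕ → M) (y : M) : Prop :=
  ∀ ξ : H, Tendsto (fun n => (x n).1 ξ) atTop (𝓝 (y.1 ξ))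

namespace TendstoStrongly

variable {x : ℕ → M} {y z : M}

lemma unique (h : TendstoStrongly x y) (h' : TendstoStrongly x z) : y = z :=
  Subtype.ext <| ContinuousLinearMap.ext fun ξ => tendsto_nhds_unique (h ξ) (h' ξ)

lemma const_sub (z : M) (h : TendstoStrongly x y) :
    TendstoStrongly (fun n => z - x n) (z - y) :=
  fun ξ => (h ξ).const_sub (z.1 ξ)

lemma mul_right (h : TendstoStrongly x y) (z : M) :
    TendstoStrongly (fun n => x n * z) (y * z) :=
  fun ξ => h (z.1 ξ)

lemma mul_left (z : M) (h : TendstoStrongly x y) :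
    TendstoStrongly (fun n => z * x n) (z * y) :=
  fun ξ => (z.1.continuous.tendsto _).comp (h ξ)

lemma nonneg (h : TendstoStrongly x y) (hx : ∀ᶠ n in atTop, 0 ≤ x n) : 0 ≤ y :=
  nonneg_of_forall_inner_apply_nonneg fun ξ =>
    ge_of_tendsto ((h ξ).inner tendsto_const_nhds) <| hx.mono fun n hn =>
      ((ContinuousLinearMap.nonneg_iff_isPositive (x n).1).1 hn).inner_nonneg_left ξ

lemma le_of_eventually_le (h : TendstoStrongly x y) (hx : ∀ᶠ n in atTop, x n ≤ z) : y ≤ z :=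
  sub_nonneg.1 <| (h.const_sub z).nonneg <| hx.mono fun _ => sub_nonneg.2

end TendstoStrongly

lemma exists_tendstoStrongly_of_forall_tendsto {x : ℕ → M}
    (h : ∀ ξ, ∃ η, Tendsto (fun n => (x n).1 ξ) atTop (𝓝 η)) : ∃ y, TendstoStrongly x y := by
  choose y hy using h
  refine ⟨⟨continuousLinearMapOfTendsto (fun n => (x n).1) (tendsto_pi_nhds.2 hy),
    mem_of_forall_commute fun z hz => ?_⟩, hy⟩
  ext ξ
  refine tendsto_nhds_unique (hy (z ξ)) (((z.continuous.tendsto _).comp (hy ξ)).congr fun n => ?_)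
  exact congr($((commute_of_mem_commutant (x n).2 hz).eq.symm) ξ)

lemma exists_tendstoStrongly_of_antitone {x : ℕ → M} (hx : ∀ n, 0 ≤ x n) (hanti : Antitone x) :
    ∃ y, TendstoStrongly x y ∧ 0 ≤ y ∧ ∀ n, y ≤ x n := by
  obtain ⟨y, hy⟩ := exists_tendstoStrongly_of_forall_tendsto fun ξ =>
    cauchySeq_tendsto_of_complete
      (cauchySeq_apply_of_antitone (x := fun n => (x n).1) hx (fun _ _ h => hanti h) ξ)
  exact ⟨y, hy, hy.nonneg (.of_forall hx),
    fun n => hy.le_of_eventually_le (eventually_atTop.2 ⟨n, fun _ => (hanti ·)⟩)⟩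

lemma exists_tendstoStrongly_inverse_one_add {a : ℕ → M} (ha : ∀ n, 0 ≤ a n) (hmono : Monotone a) :
    ∃ y, TendstoStrongly (fun n => (1 + a n)⁻¹ʳ) y ∧ 0 ≤ y ∧ ∀ n, y ≤ (1 + a n)⁻¹ʳ :=
  exists_tendstoStrongly_of_antitone (fun n => inverse_one_add_nonneg (ha n))
    fun _ _ h => inverse_one_add_le_inverse_one_add (ha _) (hmono h)

lemma TendstoStrongly.inverse_one_add {a : ℕ → M} {b : M} (h : TendstoStrongly a b)
    (ha : ∀ n, 0 ≤ a n) (hb : 0 ≤ b) :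
    TendstoStrongly (fun n => (1 + a n)⁻¹ʳ) (1 + b)⁻¹ʳ := by
  intro ξ
  rw [tendsto_iff_norm_sub_tendsto_zero]
  set η := ((1 + b)⁻¹ʳ : M).1 ξ
  have hη : Tendsto (fun n => ‖(b - a n).1 η‖) atTop (𝓝 0) := by
    simpa using ((h.const_sub b) η).norm
  refine squeeze_zero (fun _ => norm_nonneg _) (fun n => ?_) hη
  have hres := congr(($(inverse_one_add_sub_inverse_one_add (ha n) hb)).1 ξ)
  calc ‖((1 + a n)⁻¹ʳ : M).1 ξ - ((1 + b)⁻¹ʳ : M).1 ξ‖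
      = ‖((1 + a n)⁻¹ʳ : M).1 ((b - a n).1 η)‖ := congrArg norm hres
    _ ≤ ‖((1 + a n)⁻¹ʳ : M)‖ * ‖(b - a n).1 η‖ := ((1 + a n)⁻¹ʳ : M).1.le_opNorm _
    _ ≤ ‖(b - a n).1 η‖ :=
      mul_le_of_le_one_left (norm_nonneg _) (norm_inverse_one_add_le (ha n))

lemma TendstoStrongly.sub_le_re_inner_of_inverse_one_add {a : ℕ → M} {b : M}
    (h : TendstoStrongly (fun n => (1 + a n)⁻¹ʳ) b) (ha : ∀ n, 0 ≤ a n) {ξ : H} {c : ℝ}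
    (hc : ∀ n, (⟪(a n).1 ξ, ξ⟫_ℂ).re ≤ c) : ‖ξ‖ ^ 2 - c ≤ (⟪b.1 ξ, ξ⟫_ℂ).re := by
  refine ge_of_tendsto' ((Complex.continuous_re.tendsto _).comp
    ((h ξ).inner tendsto_const_nhds)) fun n => ?_
  calc ‖ξ‖ ^ 2 - c ≤ ‖ξ‖ ^ 2 - (⟪(a n).1 ξ, ξ⟫_ℂ).re := by gcongr; exact hc n
    _ = (⟪(1 - a n).1 ξ, ξ⟫_ℂ).re := by simp [← Complex.ofReal_pow]
    _ ≤ (⟪((1 + a n)⁻¹ʳ : M).1 ξ, ξ⟫_ℂ).re :=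
      re_inner_coe_apply_mono (one_sub_le_inverse_one_add (ha n)) ξ

end StrongLimits

section KernelProjections

open Filter Topology Ring

variable {H : Type} [NormedAddCommGroup H] [InnerProductSpace ℂ H] [CompleteSpace H]
  {M : VonNeumannAlgebra H}

lemma starProjection_ker_mem (a : M) : a.1.ker.starProjection ∈ M := by
  rw [VonNeumannAlgebra.IsStarProjection.mem_iff isStarProjection_starProjection]
  intro y hy
  rw [Submodule.range_starProjection, Module.End.mem_invtSubmodule]
  intro ξ hξ
  have hcomm : a.1 (y ξ) = y (a.1 ξ) := congr($((commute_of_mem_commutant a.2 hy).eq) ξ)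
  change a.1 (y ξ) = 0
  rw [hcomm, show a.1 ξ = 0 from hξ, map_zero]

/-- The orthogonal projection onto the kernel of `a`, as an element of `M`. -/
noncomputable def kerProj (a : M) : M := ⟨a.1.ker.starProjection, starProjection_ker_mem a⟩

lemma isStarProjection_kerProj (a : M) : IsStarProjection (kerProj a) where
  isIdempotentElem := Subtype.ext (Submodule.isIdempotentElem_starProjection _)
  isSelfAdjoint := Subtype.ext isStarProjection_starProjection.isSelfAdjoint

lemma kerProj_apply_eq_self_iff {a : M} {ξ : H} : (kerProj a).1 ξ = ξ ↔ a.1 ξ = 0 :=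
  Submodule.starProjection_eq_self_iff

lemma mul_kerProj (a : M) : a * kerProj a = 0 :=
  Subtype.ext <| ContinuousLinearMap.ext fun ξ => Submodule.starProjection_apply_mem a.1.ker ξ

lemma kerProj_mul_eq_self {a b : M} (h : a * b = 0) : kerProj a * b = b :=
  Subtype.ext <| ContinuousLinearMap.ext fun ξ =>
    kerProj_apply_eq_self_iff.2 congr(($h).1 ξ)

lemma kerProj_apply_eq_zero_of_ker_le {a b : M} (h : ∀ ξ, a.1 ξ = 0 → b.1 ξ = 0) {ξ : H}
    (hξ : (kerProj b).1 ξ = 0) : (kerProj a).1 ξ = 0 :=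
  (Submodule.starProjection_apply_eq_zero_iff _).2 <| Submodule.orthogonal_le h <|
    (Submodule.starProjection_apply_eq_zero_iff _).1 hξ

lemma exists_spectral_projection {a : M} (ha : IsSelfAdjoint a) (c : ℝ) :
    ∃ q : M, IsStarProjection q ∧ c • q ≤ q * a * q ∧
      (1 - q) * a * (1 - q) ≤ c • (1 - q) := by
  set b : M := a - c • 1 with hb_def
  have hb : IsSelfAdjoint b := ha.sub (.smul (.all c) (.one M))
  have hdecomp : b⁺ - b⁻ = b := CFC.posPart_sub_negPart b
  set q := kerProj b⁻
  have hq : IsStarProjection q := isStarProjection_kerProj _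
  have hq' : IsStarProjection (1 - q) := hq.one_sub
  have hneg : b⁻ * q = 0 := mul_kerProj _
  have hpos : q * b⁺ = b⁺ := kerProj_mul_eq_self (CFC.negPart_mul_posPart b)
  refine ⟨q, hq, sub_nonneg.1 ?_, sub_nonneg.1 ?_⟩
  · have h : q * a * q - c • q = q * b⁺ * q := calc
      q * a * q - c • q = q * b * q := by
        rw [hb_def, mul_sub, sub_mul, mul_smul_comm, mul_one, smul_mul_assoc,
          hq.isIdempotentElem.eq]
      _ = q * (b⁺ - b⁻) * q := by rw [hdecomp]
      _ = q * b⁺ * q - q * (b⁻ * q) := by noncomm_ring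
      _ = q * b⁺ * q := by rw [hneg, mul_zero, sub_zero]
    rw [h]
    exact hq.isSelfAdjoint.conjugate_nonneg (CFC.posPart_nonneg b)
  · have h : c • (1 - q) - (1 - q) * a * (1 - q) = (1 - q) * b⁻ * (1 - q) := calc
      c • (1 - q) - (1 - q) * a * (1 - q) = -((1 - q) * b * (1 - q)) := by
        rw [hb_def, mul_sub (1 - q), sub_mul _ _ (1 - q), mul_smul_comm, mul_one, smul_mul_assoc,
          hq'.isIdempotentElem.eq, neg_sub]
      _ = -((1 - q) * (b⁺ - b⁻) * (1 - q)) := by rw [hdecomp]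
      _ = (1 - q) * b⁻ * (1 - q) - (b⁺ - q * b⁺) * (1 - q) := by noncomm_ring
      _ = (1 - q) * b⁻ * (1 - q) := by rw [hpos, sub_self, zero_mul, sub_zero]
    rw [h]
    exact hq'.isSelfAdjoint.conjugate_nonneg (CFC.negPart_nonneg b)

lemma tendsto_apply_zero_of_kerProj_apply_eq_zero {x : ℕ → M} {C : ℝ} (hx : ∀ n, ‖x n‖ ≤ C)
    {a : M} (ha : IsSelfAdjoint a)
    (h : ∀ η, Tendsto (fun n => (x n).1 (a.1 η)) atTop (𝓝 0)) {ξ : H}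
    (hξ : (kerProj a).1 ξ = 0) : Tendsto (fun n => (x n).1 ξ) atTop (𝓝 0) := by
  have hclosed : IsClosed {ξ : H | Tendsto (fun n => (x n).1 ξ) atTop (𝓝 0)} :=
    (LipschitzWith.uniformEquicontinuous (fun n => (x n).1) C.toNNReal fun n =>
      ((x n).1.lipschitzWith_of_opNorm_le ((hx n).trans C.le_coe_toNNReal)))
      |>.equicontinuous.isClosed_setOfPred_tendsto continuous_const
  have hrange : (a.1.range.topologicalClosure : Set H) ⊆
      {ξ : H | Tendsto (fun n => (x n).1 ξ) atTop (𝓝 0)} :=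
    closure_minimal (by rintro _ ⟨η, rfl⟩; exact h η) hclosed
  refine hrange ?_
  have hker := (Submodule.starProjection_apply_eq_zero_iff _).1 hξ
  rwa [ContinuousLinearMap.orthogonal_ker, ← ContinuousLinearMap.star_eq_adjoint,
    show star a.1 = a.1 from congrArg Subtype.val ha.star_eq] at hker

lemma tendsto_inverse_one_add_smul_apply_zero {a : M} (ha : 0 ≤ a) {ξ : H}
    (hξ : (kerProj a).1 ξ = 0) :
    Tendsto (fun n : ℕ => ((1 + (n : ℝ) • a)⁻¹ʳ : M).1 ξ) atTop (𝓝 0) := by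
  have hna (n : ℕ) : 0 ≤ (n : ℝ) • a := smul_nonneg n.cast_nonneg ha
  have hbound (n : ℕ) (hn : 0 < n) : ‖(1 + (n : ℝ) • a)⁻¹ʳ * a‖ ≤ 1 / n := by
    have hmul : (1 + (n : ℝ) • a)⁻¹ʳ * a = (1 / n : ℝ) • (1 - (1 + (n : ℝ) • a)⁻¹ʳ) := by
      rw [← inverse_one_add_mul_self (hna n), mul_smul_comm, smul_smul,
        one_div_mul_cancel (by positivity), one_smul]
    have hnorm : ‖1 - (1 + (n : ℝ) • a)⁻¹ʳ‖ ≤ 1 :=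
      (CStarAlgebra.norm_le_one_iff_of_nonneg _ (sub_nonneg.2 (inverse_one_add_le_one (hna n)))).2
        (sub_le_self _ (inverse_one_add_nonneg (hna n)))
    rw [hmul, norm_smul, Real.norm_of_nonneg (by positivity)]
    exact mul_le_of_le_one_right (by positivity) hnorm
  refine tendsto_apply_zero_of_kerProj_apply_eq_zero
    (fun n => norm_inverse_one_add_le (hna n)) ha.isSelfAdjoint (fun η => ?_) hξ
  refine squeeze_zero_norm' (a := fun n : ℕ => 1 / (n : ℝ) * ‖η‖) ?_
    (by simpa using tendsto_one_div_atTop_nhds_zero_nat.mul_const ‖η‖)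
  filter_upwards [eventually_gt_atTop 0] with n hn
  exact ((((1 + (n : ℝ) • a)⁻¹ʳ * a : M).1).le_opNorm η).trans (by gcongr; exact hbound n hn)

end KernelProjections

section OrthogonalPartialIsometries

open Finset

variable {R : Type*} [Ring R] [StarRing R] {q : R} {w : ℕ → R}

lemma star_sum_mul_sum_of_orthogonal {u : ℕ → R}
    (hu : ∀ i j, star (u i) * u j = if i = j then q else 0) (hwq : ∀ i, w i * q = w i)
    (s : Finset ℕ) :
    star (∑ i ∈ s, u i * star (w i)) * ∑ i ∈ s, u i * star (w i) = ∑ i ∈ s, w i * star (w i) := by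
  rw [star_sum, sum_mul_sum]
  refine sum_congr rfl fun i hi => ?_
  rw [sum_eq_single_of_mem i hi fun j _ hj => ?_]
  all_goals
    rw [star_mul, star_star, mul_assoc, ← mul_assoc (star (u i)), hu]
  · rw [if_pos rfl, ← mul_assoc, hwq]
  · rw [if_neg hj.symm, zero_mul, mul_zero]

lemma sum_mul_star_mul_of_orthogonal (hw : ∀ i j, star (w i) * w j = if i = j then q else 0)
    (hwq : ∀ i, w i * q = w i) (s : Finset ℕ) (j : ℕ) :
    (∑ i ∈ s, w i * star (w i)) * w j = if j ∈ s then w j else 0 := by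
  rw [sum_mul, ← sum_ite_eq' s j w]
  refine sum_congr rfl fun i _ => ?_
  rw [mul_assoc, hw]
  split_ifs with h
  · exact hwq i
  · exact mul_zero _

lemma isStarProjection_sum_of_orthogonal (hw : ∀ i j, star (w i) * w j = if i = j then q else 0)
    (hwq : ∀ i, w i * q = w i) (s : Finset ℕ) :
    IsStarProjection (∑ i ∈ s, w i * star (w i)) := by
  have hsa : IsSelfAdjoint (∑ i ∈ s, w i * star (w i)) :=
    isSelfAdjoint_sum s fun i _ => .mul_star_self (w i)
  refine ⟨?_, hsa⟩
  have h := star_sum_mul_sum_of_orthogonal hw hwq s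
  rwa [hsa.star_eq] at h

/-- Partial sums of an isometry shifting `w i` to `w (i + 1)` and fixing vectors orthogonal to
the ranges of all `w i`. -/
def shiftSum (w : ℕ → R) (n : ℕ) : R :=
  1 - ∑ i ∈ range (n + 1), w i * star (w i) + ∑ i ∈ range (n + 1), w (i + 1) * star (w i)

lemma star_mul_shiftSum (hw : ∀ i j, star (w i) * w j = if i = j then q else 0)
    (hwq : ∀ i, w i * q = w i) (n : ℕ) : star (w 0) * shiftSum w n = 0 := by
  have hp : star (w 0) * ∑ i ∈ range (n + 1), w i * star (w i) = star (w 0) := by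
    have h := congrArg star (sum_mul_star_mul_of_orthogonal hw hwq (range (n + 1)) 0)
    rwa [if_pos (by simp), star_mul,
      (isStarProjection_sum_of_orthogonal hw hwq _).isSelfAdjoint.star_eq] at h
  have ht : star (w 0) * ∑ i ∈ range (n + 1), w (i + 1) * star (w i) = 0 := by
    rw [mul_sum]
    refine sum_eq_zero fun i _ => ?_
    rw [← mul_assoc, hw, if_neg i.succ_ne_zero.symm, zero_mul]
  rw [shiftSum, mul_add, mul_sub, mul_one, hp, ht, sub_self, add_zero]

lemma star_shiftSum_mul_shiftSum (hw : ∀ i j, star (w i) * w j = if i = j then q else 0)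
    (hwq : ∀ i, w i * q = w i) (n : ℕ) :
    star (shiftSum w n) * shiftSum w n =
      1 + w (n + 1) * star (w n) + w n * star (w (n + 1)) := by
  set p := ∑ i ∈ range (n + 1), w i * star (w i)
  set t := ∑ i ∈ range (n + 1), w (i + 1) * star (w i) with ht_def
  have hp : IsStarProjection p := isStarProjection_sum_of_orthogonal hw hwq _
  have htt : star t * t = p :=
    star_sum_mul_sum_of_orthogonal (fun i j => by simp [hw]) hwq _
  have hpt : (1 - p) * t = w (n + 1) * star (w n) := by
    rw [ht_def, mul_sum, sum_range_succ, sum_eq_zero fun i hi => ?_, zero_add]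
    all_goals
      rw [← mul_assoc, sub_mul, one_mul, sum_mul_star_mul_of_orthogonal hw hwq]
    · simp
    · rw [if_pos (by simpa using hi), sub_self, zero_mul]
  have htp : star t * (1 - p) = w n * star (w (n + 1)) := by
    simpa [hp.isSelfAdjoint.star_eq] using congrArg star hpt
  calc star (1 - p + t) * (1 - p + t)
      = (1 - p) * (1 - p) + (1 - p) * t + star t * (1 - p) + star t * t := by
        rw [star_add, star_sub, star_one, hp.isSelfAdjoint.star_eq]
        noncomm_ring
    _ = 1 + w (n + 1) * star (w n) + w n * star (w (n + 1)) := by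
        rw [hp.one_sub.isIdempotentElem.eq, hpt, htp, htt]
        abel

end OrthogonalPartialIsometries

section PartialIsometries

variable {A : Type*} [CStarAlgebra A] [PartialOrder A] [StarOrderedRing A]

lemma exists_partialIsometry_of_le {q x : A} (hq : IsStarProjection q) (hxq : x * q = x) {c : ℝ}
    (hc : 0 < c) (h : c • q ≤ star x * x) :
    ∃ y, star (x * y) * (x * y) = q ∧ x * y * q = x * y := by
  set b := star x * x + (1 - q) with hb_def
  have hqx : q * star x = star x := by simpa [hq.isSelfAdjoint.star_eq] using congrArg star hxq
  have hcomm : Commute q b := by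
    rw [commute_iff_eq, hb_def, mul_add, add_mul, ← mul_assoc, hqx, mul_assoc, hxq,
      hq.mul_one_sub_self, hq.one_sub_mul_self]
  have hle : (min c 1) • (1 : A) ≤ b := calc
    (min c 1) • (1 : A) = (min c 1) • q + (min c 1) • (1 - q) := by rw [← smul_add]; simp
    _ ≤ c • q + (1 : ℝ) • (1 - q) := add_le_add
      (smul_le_smul_of_nonneg_right (min_le_left _ _) hq.nonneg)
      (smul_le_smul_of_nonneg_right (min_le_right _ _) hq.one_sub_nonneg)
    _ ≤ b := by rw [one_smul]; exact add_le_add_left h _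
  have hb : IsStrictlyPositive b := .of_le
    (IsStrictlyPositive.smul (lt_min hc one_pos) (by grind : IsStrictlyPositive (1 : A))) hle
  set y := b ^ (-(1 / 2) : ℝ)
  have hy : star y = y := (CFC.rpow_nonneg : 0 ≤ y).star_eq
  have hyq : Commute q y := hcomm.symm.cfc_nnreal _ |>.symm
  have hyby : y * b * y = 1 := CFC.conjugate_rpow_neg_one_half b
  have hbq : b * q = star x * x := by
    rw [hb_def, add_mul, hq.one_sub_mul_self, add_zero, mul_assoc, hxq]
  refine ⟨y, ?_, by rw [mul_assoc, ← hyq.eq, ← mul_assoc, hxq]⟩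
  calc star (x * y) * (x * y) = y * (b * q) * y := by rw [star_mul, hy, hbq]; noncomm_ring
    _ = y * b * y * q := by rw [← mul_assoc, mul_assoc, hyq.eq, ← mul_assoc]
    _ = q := by rw [hyby, one_mul]

end PartialIsometries

section Finiteness

open Filter Topology Finset Ring

variable {H : Type} [NormedAddCommGroup H] [InnerProductSpace ℂ H] [CompleteSpace H]
  {M : VonNeumannAlgebra H}

lemma norm_apply_eq_of_star_mul_self_eq {a b : M} (h : star a * a = star b * b) (ξ : H) :
    ‖a.1 ξ‖ = ‖b.1 ξ‖ := by
  rw [← sq_eq_sq₀ (norm_nonneg _) (norm_nonneg _), norm_sq_apply_eq_re_inner,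
    norm_sq_apply_eq_re_inner]
  exact congr(Complex.re ⟪($h).1 ξ, ξ⟫_ℂ)

lemma TendstoStrongly.star_mul_self_eq {x : ℕ → M} {y z : M} (hx : TendstoStrongly x y)
    (h : TendstoStrongly (fun n => star (x n) * x n) z) : star y * y = z := by
  refine Subtype.ext <| ContinuousLinearMap.ext fun ξ => ext_inner_right ℂ fun η => ?_
  refine tendsto_nhds_unique (f := fun n => ⟪(star (x n) * x n).1 ξ, η⟫_ℂ) ?_
    ((h ξ).inner tendsto_const_nhds)
  have hinner (a : M) : ⟪(star a * a).1 ξ, η⟫_ℂ = ⟪a.1 ξ, a.1 η⟫_ℂ :=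
    inner_star_apply_left a.1 (a.1 ξ) η
  simpa only [hinner] using (hx ξ).inner (hx η)

variable {q : M} {w : ℕ → M}

lemma norm_sum_apply_eq_of_orthogonal (hw : ∀ i j, star (w i) * w j = if i = j then q else 0)
    {u : ℕ → M} (hu : ∀ i j, star (u i) * u j = if i = j then q else 0)
    (hwq : ∀ i, w i * q = w i) (s : Finset ℕ) (ξ : H) :
    ‖(∑ i ∈ s, u i * star (w i)).1 ξ‖ = ‖(∑ i ∈ s, w i * star (w i)).1 ξ‖ := by
  have hp := isStarProjection_sum_of_orthogonal hw hwq s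
  apply norm_apply_eq_of_star_mul_self_eq
  rw [star_sum_mul_sum_of_orthogonal hu hwq, hp.isSelfAdjoint.star_eq, hp.isIdempotentElem.eq]

lemma exists_tendstoStrongly_sum_mul_star (hw : ∀ i j, star (w i) * w j = if i = j then q else 0)
    (hwq : ∀ i, w i * q = w i) :
    ∃ p, TendstoStrongly (fun n => ∑ i ∈ range n, w i * star (w i)) p := by
  obtain ⟨p', hp', -⟩ := exists_tendstoStrongly_of_antitone
    (x := fun n => 1 - ∑ i ∈ range n, w i * star (w i))
    (fun n => (isStarProjection_sum_of_orthogonal hw hwq _).one_sub_nonneg)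
    (antitone_nat_of_succ_le fun n => sub_le_sub_left
      (by rw [sum_range_succ]; exact le_add_of_nonneg_right (mul_star_self_nonneg _)) _)
  exact ⟨1 - p', by simpa using hp'.const_sub 1⟩

lemma exists_tendstoStrongly_shiftSum (hw : ∀ i j, star (w i) * w j = if i = j then q else 0)
    (hwq : ∀ i, w i * q = w i) : ∃ v, TendstoStrongly (shiftSum w) v := by
  obtain ⟨p, hp⟩ := exists_tendstoStrongly_sum_mul_star hw hwq
  refine exists_tendstoStrongly_of_forall_tendsto fun ξ => ?_
  have hcauchy : CauchySeq fun n => (∑ i ∈ range n, w (i + 1) * star (w i)).1 ξ := by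
    have hpξ := (hp ξ).cauchySeq
    rw [Metric.cauchySeq_iff'] at hpξ ⊢
    refine fun ε hε => (hpξ ε hε).imp fun N hN n hn => (Eq.trans_lt ?_ (hN n hn))
    have hsub (u : ℕ → M) : (∑ i ∈ range n, u i).1 ξ - (∑ i ∈ range N, u i).1 ξ =
        (∑ i ∈ Ico N n, u i).1 ξ := by
      rw [sum_Ico_eq_sub _ hn]; rfl
    rw [dist_eq_norm, dist_eq_norm, hsub, hsub]
    exact norm_sum_apply_eq_of_orthogonal hw (u := fun i => w (i + 1)) (by simp [hw]) hwq _ ξ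
  obtain ⟨η, hη⟩ := cauchySeq_tendsto_of_complete hcauchy
  exact ⟨_, (((hp ξ).const_sub ξ).add hη).comp (tendsto_add_atTop_nat 1)⟩

lemma tendstoStrongly_star_shiftSum_mul_shiftSum
    (hw : ∀ i j, star (w i) * w j = if i = j then q else 0) (hwq : ∀ i, w i * q = w i) :
    TendstoStrongly (fun n => star (shiftSum w n) * shiftSum w n) 1 := by
  intro ξ
  obtain ⟨p, hp⟩ := exists_tendstoStrongly_sum_mul_star hw hwq
  have hterm : Tendsto (fun n => ‖(w n * star (w n)).1 ξ‖) atTop (𝓝 0) := by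
    have h := (((hp ξ).comp (tendsto_add_atTop_nat 1)).sub (hp ξ)).norm
    rw [sub_self, norm_zero] at h
    refine h.congr fun n => ?_
    simp only [Function.comp_apply, sum_range_succ]
    exact congrArg norm (add_sub_cancel_left _ _)
  have hnorm (u w : ℕ → M) (hw : ∀ i j, star (w i) * w j = if i = j then q else 0)
      (hu : ∀ i j, star (u i) * u j = if i = j then q else 0) (hwq : ∀ i, w i * q = w i) (n : ℕ) :
      ‖(u n * star (w n)).1 ξ‖ = ‖(w n * star (w n)).1 ξ‖ := by
    simpa only [sum_singleton] using norm_sum_apply_eq_of_orthogonal hw hu hwq {n} ξ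
  have hw' : ∀ i j, star (w (i + 1)) * w (j + 1) = if i = j then q else 0 := by simp [hw]
  have h₁ : Tendsto (fun n => (w (n + 1) * star (w n)).1 ξ) atTop (𝓝 0) :=
    tendsto_zero_iff_norm_tendsto_zero.2 <|
      hterm.congr fun n => (hnorm (fun i => w (i + 1)) w hw hw' hwq n).symm
  have h₂ : Tendsto (fun n => (w n * star (w (n + 1))).1 ξ) atTop (𝓝 0) :=
    tendsto_zero_iff_norm_tendsto_zero.2 <| (hterm.comp (tendsto_add_atTop_nat 1)).congr fun n =>
      (hnorm w (fun i => w (i + 1)) hw' hw (fun i => hwq _) n).symm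
  simp only [star_shiftSum_mul_shiftSum hw hwq]
  simpa using (h₁.const_add ξ).add h₂

lemma eq_zero_of_orthogonal_partialIsometries (hM : VNFinite M)
    (hw : ∀ i j, star (w i) * w j = if i = j then q else 0) (hwq : ∀ i, w i * q = w i) :
    q = 0 := by
  obtain ⟨v, hv⟩ := exists_tendstoStrongly_shiftSum hw hwq
  have hunitary : v * star v = 1 :=
    hM v (hv.star_mul_self_eq (tendstoStrongly_star_shiftSum_mul_shiftSum hw hwq))
  have hrange : star (w 0) * v = 0 := by
    have h := hv.mul_left (star (w 0))
    simp only [star_mul_shiftSum hw hwq] at h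
    exact h.unique fun _ => tendsto_const_nhds
  have hw₀ : star (w 0) = 0 := by
    rw [← mul_one (star (w 0)), ← hunitary, ← mul_assoc, hrange, zero_mul]
  simpa [hw₀] using (hw 0 0).symm

lemma eq_zero_of_le_star_mul_self_of_orthogonal (hM : VNFinite M) {v : ℕ → M}
    (hv : Pairwise fun i j => star (v i) * v j = 0) (hq : IsStarProjection q) {c : ℝ} (hc : 0 < c)
    (h : ∀ j, c • q ≤ q * (star (v j) * v j) * q) : q = 0 := by
  have hexists (j : ℕ) := exists_partialIsometry_of_le (x := v j * q) hq
    (by rw [mul_assoc, hq.isIdempotentElem.eq]) hc (by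
      rw [star_mul, hq.isSelfAdjoint.star_eq]
      exact (h j).trans_eq (by noncomm_ring))
  choose y hy hyq using hexists
  refine eq_zero_of_orthogonal_partialIsometries hM (w := fun j => v j * q * y j)
    (fun i j => ?_) hyq
  split_ifs with hij
  · rw [← hij, hy]
  · calc star (v i * q * y i) * (v j * q * y j)
        = star (y i) * star q * (star (v i) * v j) * (q * y j) := by
          simp only [star_mul, mul_assoc]
      _ = 0 := by rw [hv hij, mul_zero, zero_mul]

lemma le_two_thirds_of_orthogonal (hM : VNFinite M) {v : ℕ → M}
    (hv : Pairwise fun i j => star (v i) * v j = 0) {r : M} (hr : IsSelfAdjoint r)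
    (h : ∀ j, (2 : ℝ) • r - 1 ≤ star (v j) * v j) : r ≤ (2 / 3 : ℝ) • 1 := by
  obtain ⟨q, hq, hlow, hupp⟩ := exists_spectral_projection hr (2 / 3)
  have hq0 : q = 0 := by
    refine eq_zero_of_le_star_mul_self_of_orthogonal hM hv hq (c := 1 / 3) (by norm_num)
      fun j => ?_
    calc (1 / 3 : ℝ) • q = (2 : ℝ) • ((2 / 3 : ℝ) • q) - q := by module
      _ ≤ (2 : ℝ) • (q * r * q) - q := by gcongr
      _ = q * ((2 : ℝ) • r - 1) * q := by
        rw [mul_sub, sub_mul, mul_one, hq.isIdempotentElem.eq, mul_smul_comm, smul_mul_assoc]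
      _ ≤ q * (star (v j) * v j) * q := hq.isSelfAdjoint.conjugate_le_conjugate (h j)
  simpa [hq0] using hupp

lemma eq_zero_of_inner_inverse_one_add_le (hM : VNFinite M) {v : ℕ → M}
    (hv : Pairwise fun i j => star (v i) * v j = 0) {ξ : H}
    (h : ∀ j, (⟪((1 + star (v j) * v j)⁻¹ʳ : M).1 ξ, ξ⟫_ℂ).re ≤ 1 / 8 * (1 / 2) ^ j * ‖ξ‖ ^ 2) :
    ξ = 0 := by
  set d : ℕ → M := fun j => (1 + star (v j) * v j)⁻¹ʳ
  have hd (j : ℕ) : 0 ≤ d j := inverse_one_add_nonneg (star_mul_self_nonneg _)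
  have hsum (n : ℕ) : 0 ≤ ∑ j ∈ range n, d j := sum_nonneg fun j _ => hd j
  obtain ⟨r, hr, hr0, hrle⟩ := exists_tendstoStrongly_inverse_one_add hsum
    (monotone_nat_of_le_succ fun n => by
      rw [sum_range_succ]; exact le_add_of_nonneg_right (hd n))
  have hrv (j : ℕ) : (2 : ℝ) • r - 1 ≤ star (v j) * v j := calc
    (2 : ℝ) • r - 1 ≤ (2 : ℝ) • (1 + d j)⁻¹ʳ - 1 := by
      gcongr
      exact (hrle (j + 1)).trans (inverse_one_add_le_inverse_one_add (hd j)
        (single_le_sum (fun i _ => hd i) (self_mem_range_succ j)))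
    _ ≤ star (v j) * v j :=
      two_smul_inverse_one_add_inverse_one_add_sub_one_le (star_mul_self_nonneg _)
  have hsum_le (n : ℕ) : (⟪(∑ j ∈ range n, d j).1 ξ, ξ⟫_ℂ).re ≤ 1 / 4 * ‖ξ‖ ^ 2 := calc
    _ = ∑ j ∈ range n, (⟪(d j).1 ξ, ξ⟫_ℂ).re := by simp
    _ ≤ ∑ j ∈ range n, 1 / 8 * (1 / 2) ^ j * ‖ξ‖ ^ 2 := sum_le_sum fun j _ => h j
    _ = 1 / 8 * (∑ j ∈ range n, (1 / 2 : ℝ) ^ j) * ‖ξ‖ ^ 2 := by rw [mul_sum, sum_mul]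
    _ ≤ 1 / 8 * 2 * ‖ξ‖ ^ 2 := by gcongr; exact sum_geometric_two_le n
    _ = 1 / 4 * ‖ξ‖ ^ 2 := by ring
  have hlower := hr.sub_le_re_inner_of_inverse_one_add hsum hsum_le
  have hupper : (⟪r.1 ξ, ξ⟫_ℂ).re ≤ 2 / 3 * ‖ξ‖ ^ 2 := by
    have h := re_inner_coe_apply_mono (le_two_thirds_of_orthogonal hM hv hr0.isSelfAdjoint hrv) ξ
    simpa [inner_smul_left, ← Complex.ofReal_pow] using h
  refine norm_eq_zero.1 (pow_eq_zero_iff two_ne_zero |>.1 ?_)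
  linarith [sq_nonneg ‖ξ‖]

end Finiteness

section Cutoffs

/-- Continuous cutoff functions vanishing near `0` and increasing to the indicator function of
`(0, ∞)`; where `cutoff n` is nonzero, all later cutoffs are equal to `1`. -/
noncomputable def cutoff (n : ℕ) (t : ℝ) : ℝ := max 0 (min 1 (2 ^ n * t - 1))

@[fun_prop]
lemma continuous_cutoff (n : ℕ) : Continuous (cutoff n) := by
  unfold cutoff
  fun_prop

lemma cutoff_le_one (n : ℕ) (t : ℝ) : cutoff n t ≤ 1 :=
  max_le zero_le_one (min_le_left _ _)

lemma cutoff_mono {n m : ℕ} (h : n ≤ m) {t : ℝ} (ht : 0 ≤ t) : cutoff n t ≤ cutoff m t := by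
  unfold cutoff
  gcongr
  norm_num

lemma cutoff_eq_zero_or_eq_one {n m : ℕ} (h : n < m) {t : ℝ} (ht : 0 ≤ t) :
    cutoff n t = 0 ∨ cutoff m t = 1 := by
  rcases le_total (2 ^ n * t) 1 with hle | hle
  · exact .inl (max_eq_left ((min_le_right _ _).trans (by linarith)))
  · right
    have hpow : (2 : ℝ) ^ (n + 1) * t ≤ 2 ^ m * t := by
      gcongr
      · norm_num
      · exact h
    rw [cutoff, min_eq_left (by rw [pow_succ] at hpow; linarith), max_eq_right zero_le_one]

lemma one_sub_cutoff_mul_le (n : ℕ) {t : ℝ} (ht : 0 ≤ t) : (1 - cutoff n t) * t ≤ 2 / 2 ^ n := by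
  have hpow : (0 : ℝ) < 2 ^ n := by positivity
  rw [le_div_iff₀ hpow]
  rcases le_total (2 ^ n * t) 2 with hle | hle
  · have : 0 ≤ cutoff n t := le_max_left _ _
    nlinarith [mul_nonneg hpow.le ht]
  · rw [cutoff, min_eq_left (by linarith), max_eq_right zero_le_one]
    norm_num

lemma exists_cutoff_eq_mul (n : ℕ) : ∃ g : ℝ → ℝ, Continuous g ∧ ∀ t, cutoff n t = t * g t := by
  have hpos (t : ℝ) : 0 < max t (2 ^ n)⁻¹ := lt_max_of_lt_right (by positivity)
  refine ⟨fun t => cutoff n t / max t (2 ^ n)⁻¹,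
    (continuous_cutoff n).div (by fun_prop) fun t => (hpos t).ne', fun t => ?_⟩
  rcases le_total t (2 ^ n)⁻¹ with hle | hle
  · have h0 : cutoff n t = 0 := max_eq_left ((min_le_right _ _).trans (sub_nonpos.2
      ((le_inv_mul_iff₀ (by positivity)).1 (by simpa using hle))))
    simp [h0]
  · have ht : 0 < t := lt_of_lt_of_le (by positivity) hle
    simp only [max_eq_left hle, mul_div_cancel₀ _ ht.ne']

variable {A : Type*} [CStarAlgebra A]

/-- The square root of the difference of two cutoffs of `a`. -/
noncomputable def bandSqrt (n m : ℕ) (a : A) : A := cfc (fun t => √(cutoff m t - cutoff n t)) a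

lemma star_bandSqrt (n m : ℕ) (a : A) : star (bandSqrt n m a) = bandSqrt n m a :=
  (cfc_predicate _ a : IsSelfAdjoint (bandSqrt n m a)).star_eq

variable [PartialOrder A] [StarOrderedRing A] {a : A}

lemma cfc_cutoff_le_one (n : ℕ) (a : A) : cfc (cutoff n) a ≤ 1 :=
  cfc_le_one _ _ fun t _ => cutoff_le_one n t

lemma exists_cfc_cutoff_eq_mul (ha : 0 ≤ a) (n : ℕ) : ∃ b, cfc (cutoff n) a = a * b := by
  obtain ⟨g, hg, hcg⟩ := exists_cutoff_eq_mul n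
  refine ⟨cfc g a, ?_⟩
  rw [funext hcg, cfc_mul (fun t => t) g a, cfc_id' ℝ a]

lemma norm_one_sub_cfc_cutoff_mul_le (ha : 0 ≤ a) (n : ℕ) :
    ‖(1 - cfc (cutoff n) a) * a‖ ≤ 2 / 2 ^ n := by
  have h : (1 - cfc (cutoff n) a) * a = cfc (fun t => (1 - cutoff n t) * t) a := by
    rw [cfc_mul (fun t => 1 - cutoff n t) (fun t => t) a, cfc_id' ℝ a,
      cfc_sub (fun _ => 1) (cutoff n) a, cfc_const_one ℝ a]
  rw [h]
  refine norm_cfc_le (by positivity) fun t ht => ?_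
  have ht0 : 0 ≤ t := spectrum_nonneg_of_nonneg ha ht
  rw [Real.norm_of_nonneg (mul_nonneg (sub_nonneg.2 (cutoff_le_one n t)) ht0)]
  exact one_sub_cutoff_mul_le n ht0

lemma bandSqrt_mul_self (ha : 0 ≤ a) {n m : ℕ} (h : n ≤ m) :
    bandSqrt n m a * bandSqrt n m a = cfc (cutoff m) a - cfc (cutoff n) a := by
  rw [bandSqrt, ← cfc_mul _ _ a, ← cfc_sub _ _ a]
  exact cfc_congr fun t ht => Real.mul_self_sqrt
    (sub_nonneg.2 (cutoff_mono h (spectrum_nonneg_of_nonneg ha ht)))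

lemma bandSqrt_mul_bandSqrt (ha : 0 ≤ a) {k l m n : ℕ} (hkl : k ≤ l) (hlm : l < m) (hmn : m ≤ n) :
    bandSqrt k l a * bandSqrt m n a = 0 := by
  rw [bandSqrt, bandSqrt, ← cfc_mul _ _ a, ← cfc_zero ℝ a]
  refine cfc_congr fun t ht => ?_
  have ht0 : 0 ≤ t := spectrum_nonneg_of_nonneg ha ht
  rcases cutoff_eq_zero_or_eq_one hlm ht0 with h | h
  · simp [h, (le_antisymm ((cutoff_mono hkl ht0).trans_eq h) (le_max_left _ _) : cutoff k t = 0)]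
  · simp [h, (le_antisymm (cutoff_le_one n t) (h.symm.trans_le (cutoff_mono hmn ht0)))]

end Cutoffs

section MurrayVonNeumann

open Filter Topology Ring

variable {H : Type} [NormedAddCommGroup H] [InnerProductSpace ℂ H] [CompleteSpace H]
  {M : VonNeumannAlgebra H} {a r : M}

lemma tendsto_one_sub_cfc_cutoff_apply_zero (hr : 0 ≤ r) {ξ : H} (hξ : (kerProj r).1 ξ = 0) :
    Tendsto (fun n => (1 - cfc (cutoff n) r : M).1 ξ) atTop (𝓝 0) := by
  have hbound (n : ℕ) : ‖1 - cfc (cutoff n) r‖ ≤ 1 :=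
    (CStarAlgebra.norm_le_one_iff_of_nonneg _ (sub_nonneg.2 (cfc_cutoff_le_one n r))).2
      (sub_le_self _ (cfc_nonneg fun t _ => le_max_left _ _))
  refine tendsto_apply_zero_of_kerProj_apply_eq_zero hbound hr.isSelfAdjoint (fun η => ?_) hξ
  have hgeom : Tendsto (fun n : ℕ => 2 / (2 : ℝ) ^ n * ‖η‖) atTop (𝓝 0) := by
    simpa using ((tendsto_const_nhds (x := (2 : ℝ))).div_atTop
      (tendsto_pow_atTop_atTop_of_one_lt (one_lt_two (α := ℝ)))).mul_const ‖η‖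
  refine squeeze_zero_norm (fun n => ?_) hgeom
  exact (((1 - cfc (cutoff n) r) * r : M).1.le_opNorm η).trans
    (by gcongr; exact norm_one_sub_cfc_cutoff_mul_le hr n)

lemma tendstoStrongly_cfc_cutoff_mul (hr : 0 ≤ r) (har : kerProj r * a = 0) :
    TendstoStrongly (fun n => cfc (cutoff n) r * a) a := by
  intro ξ
  have h := tendsto_one_sub_cfc_cutoff_apply_zero hr (ξ := a.1 ξ) congr(($har).1 ξ)
  simpa using h.const_sub (a.1 ξ)

lemma apply_eq_zero_of_conjugate_one_sub_cfc_cutoff (hr : 0 ≤ r)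
    (hdisj : ∀ ξ η, a.1 ξ = r.1 η → a.1 ξ = 0) {n : ℕ} {ξ : H}
    (hξ : (star a * (1 - cfc (cutoff n) r) * a).1 ξ = 0) : a.1 ξ = 0 := by
  obtain ⟨b, hb⟩ := exists_cfc_cutoff_eq_mul hr n
  have hinner : ⟪(1 - cfc (cutoff n) r : M).1 (a.1 ξ), a.1 ξ⟫_ℂ = 0 :=
    (inner_star_apply_left a.1 _ ξ).symm.trans ((congrArg (⟪·, ξ⟫_ℂ) hξ).trans (inner_zero_left ξ))
  have hzero : (1 - cfc (cutoff n) r : M).1 (a.1 ξ) = 0 := by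
    have h := norm_sq_apply_le_of_nonneg (a := (1 - cfc (cutoff n) r : M).1)
      (sub_nonneg.2 (cfc_cutoff_le_one n r)) (a.1 ξ)
    rw [hinner, Complex.zero_re, mul_zero] at h
    simpa using h
  refine hdisj ξ (b.1 (a.1 ξ)) ?_
  rw [hb] at hzero
  exact sub_eq_zero.1 hzero

lemma tendstoStrongly_star_bandSqrt_mul (hr : 0 ≤ r) (har : kerProj r * a = 0) (n : ℕ) (c : ℝ) :
    TendstoStrongly
      (fun m => c • (star (bandSqrt n (n + m) r * a) * (bandSqrt n (n + m) r * a)))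
      (c • (star a * (1 - cfc (cutoff n) r) * a)) := by
  intro ξ
  have hcut := ((tendstoStrongly_cfc_cutoff_mul hr har ξ).comp
    (tendsto_add_atTop_nat n)).sub_const ((cfc (cutoff n) r).1 (a.1 ξ))
  refine (((c • star a : M).1.continuous.tendsto _).comp hcut).congr fun m => ?_
  have hband : c • (star (bandSqrt n (n + m) r * a) * (bandSqrt n (n + m) r * a)) =
      c • star a * (cfc (cutoff (m + n)) r * a - cfc (cutoff n) r * a) := by
    rw [star_mul, star_bandSqrt, ← sub_mul, add_comm m, ← bandSqrt_mul_self hr (n.le_add_right m),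
      smul_mul_assoc]
    simp only [mul_assoc]
  exact congr(($hband.symm).1 ξ)

lemma exists_inner_inverse_one_add_bandSqrt_lt (hr : 0 ≤ r) (har : kerProj r * a = 0)
    (hdisj : ∀ ξ η, a.1 ξ = r.1 η → a.1 ξ = 0) {ξ : H} (hξ : (kerProj a).1 ξ = 0) {ε : ℝ}
    (hε : 0 < ε) (n : ℕ) : ∃ m, n < m ∧ ∃ c : ℝ,
      (⟪((1 + star (c • (bandSqrt n m r * a)) * (c • (bandSqrt n m r * a)))⁻¹ʳ : M).1 ξ, ξ⟫_ℂ).re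
        < ε := by
  set b := star a * (1 - cfc (cutoff n) r) * a
  have hb : 0 ≤ b := star_left_conjugate_nonneg (sub_nonneg.2 (cfc_cutoff_le_one n r)) a
  have hre {x : ℕ → H} {η : H} (h : Tendsto x atTop (𝓝 η)) :
      Tendsto (fun k => (⟪x k, ξ⟫_ℂ).re) atTop (𝓝 (⟪η, ξ⟫_ℂ).re) :=
    (Complex.continuous_re.tendsto _).comp (h.inner tendsto_const_nhds)
  obtain ⟨k, hk⟩ : ∃ k : ℕ, (⟪((1 + (k : ℝ) • b)⁻¹ʳ : M).1 ξ, ξ⟫_ℂ).re < ε := by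
    have hbξ : (kerProj b).1 ξ = 0 := kerProj_apply_eq_zero_of_ker_le
      (fun η => apply_eq_zero_of_conjugate_one_sub_cfc_cutoff hr hdisj) hξ
    have h := hre (tendsto_inverse_one_add_smul_apply_zero hb hbξ)
    rw [inner_zero_left, Complex.zero_re] at h
    exact (h.eventually_lt_const hε).exists
  have hlim := (tendstoStrongly_star_bandSqrt_mul hr har n k).inverse_one_add
    (fun m => smul_nonneg k.cast_nonneg (star_mul_self_nonneg _)) (smul_nonneg k.cast_nonneg hb)
  obtain ⟨m, hm, hm0⟩ :=
    (((hre (hlim ξ)).eventually_lt_const hk).and (eventually_gt_atTop 0)).exists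
  refine ⟨n + m, by omega, √k, ?_⟩
  rwa [star_smul, smul_mul_smul_comm, star_trivial, Real.mul_self_sqrt k.cast_nonneg]

lemma eq_zero_of_kerProj_mul_eq_zero (hM : VNFinite M) (hr : 0 ≤ r) (har : kerProj r * a = 0)
    (hdisj : ∀ ξ η, a.1 ξ = r.1 η → a.1 ξ = 0) {ξ : H} (hξ : (kerProj a).1 ξ = 0) : ξ = 0 := by
  by_contra hne
  have hε (j : ℕ) : 0 < 1 / 8 * (1 / 2) ^ j * ‖ξ‖ ^ 2 := by positivity
  choose m hm c hc using fun j => exists_inner_inverse_one_add_bandSqrt_lt hr har hdisj hξ (hε j)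
  set N : ℕ → ℕ := Nat.rec 0 fun j n => m j n + 1
  have hN : Monotone N := monotone_nat_of_le_succ fun j => (hm j (N j)).le.trans (Nat.le_succ _)
  set v : ℕ → M := fun j => c j (N j) • (bandSqrt (N j) (m j (N j)) r * a)
  have hv {i j : ℕ} (hij : i < j) : star (v i) * v j = 0 := by
    have hband := bandSqrt_mul_bandSqrt hr (hm i (N i)).le (hN hij : m i (N i) < N j)
      (hm j (N j)).le
    rw [star_smul, star_mul, star_bandSqrt, smul_mul_smul_comm, mul_assoc, ← mul_assoc _ _ a, hband,
      zero_mul, mul_zero, smul_zero]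
  refine hne (eq_zero_of_inner_inverse_one_add_le hM (v := v) (fun i j hij => ?_)
    fun j => (hc j (N j)).le)
  rcases hij.lt_or_gt with h | h
  · exact hv h
  · simpa using congrArg star (hv h)

lemma apply_eq_zero_of_kerProj_apply_eq_zero (hM : VNFinite M) (hr : 0 ≤ r)
    (hdisj : ∀ ξ η, a.1 ξ = r.1 η → a.1 ξ = 0) {ξ : H} (hξ : (kerProj r).1 (a.1 ξ) = 0) :
    a.1 ξ = 0 := by
  set p := kerProj (kerProj r * a)
  have hpξ : p.1 ξ = ξ := kerProj_apply_eq_self_iff.2 hξ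
  have hap : kerProj r * (a * p) = 0 := by rw [← mul_assoc, mul_kerProj]
  set η := ξ - (kerProj (a * p)).1 ξ
  have hη : η = 0 := eq_zero_of_kerProj_mul_eq_zero hM hr hap (fun ζ => hdisj (p.1 ζ)) <|
    congr(($((isStarProjection_kerProj (a * p)).mul_one_sub_self)).1 ξ)
  have h := kerProj_apply_eq_self_iff.1 (sub_eq_zero.1 hη).symm
  rwa [show (a * p).1 ξ = a.1 (p.1 ξ) from rfl, hpξ] at h

end MurrayVonNeumann

section PositiveFunctionals

variable {A : Type*} [CStarAlgebra A] [PartialOrder A]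

lemma re_apply_smul (f : A →ₚ[ℂ] ℂ) (c : ℝ) (a : A) : (f (c • a)).re = c * (f a).re := by
  rw [← Complex.coe_smul, map_smul, smul_eq_mul, Complex.re_ofReal_mul]

variable [StarOrderedRing A]

lemma norm_toPreGNS_mul_le (f : A →ₚ[ℂ] ℂ) (a b : A) :
    ‖f.toPreGNS (a * b)‖ ≤ ‖a‖ * ‖f.toPreGNS b‖ :=
  (f.leftMulMapPreGNS a).le_of_opNorm_le (LinearMap.mkContinuous_norm_le _ (norm_nonneg a) _)
    (f.toPreGNS b)

lemma norm_sq_toPreGNS (f : A →ₚ[ℂ] ℂ) (a : A) : ‖f.toPreGNS a‖ ^ 2 = (f (star a * a)).re := by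
  rw [← Complex.ofReal_re (‖f.toPreGNS a‖ ^ 2), Complex.ofReal_pow,
    PositiveLinearMap.preGNS_norm_sq, PositiveLinearMap.ofPreGNS_toPreGNS]

lemma norm_toPreGNS_mul_eq_zero {f : A →ₚ[ℂ] ℂ} {y : A} (hy : ‖f.toPreGNS y‖ = 0) (x : A) :
    ‖f.toPreGNS (x * y)‖ = 0 :=
  (norm_nonneg _).antisymm' ((norm_toPreGNS_mul_le f x y).trans_eq (by rw [hy, mul_zero]))

lemma norm_toPreGNS_mul_one_sub {f : A →ₚ[ℂ] ℂ} {y : A} (hy : ‖f.toPreGNS y‖ = 0) (x : A) :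
    ‖f.toPreGNS (x * (1 - y))‖ = ‖f.toPreGNS x‖ := by
  have h := abs_norm_sub_norm_le (f.toPreGNS (x * (1 - y))) (f.toPreGNS x)
  rw [← map_sub, mul_one_sub, sub_sub_cancel_left, map_neg, norm_neg,
    norm_toPreGNS_mul_eq_zero hy] at h
  rw [mul_one_sub, sub_eq_zero.1 (abs_nonpos_iff.1 h)]

lemma eq_of_norm_toPreGNS_eq {f g : A →ₚ[ℂ] ℂ} (h : ∀ x, ‖f.toPreGNS x‖ = ‖g.toPreGNS x‖) :
    f = g := by
  suffices h : f.toLinearMap = g.toLinearMap from DFunLike.ext _ _ fun a => congr($h a)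
  refine LinearMap.ext_on CStarAlgebra.span_nonneg fun a ha => ?_
  obtain ⟨b, rfl⟩ := CStarAlgebra.nonneg_iff_eq_star_mul_self.1 (show 0 ≤ a from ha)
  have hf := Complex.nonneg_iff.1 (map_nonneg f (star_mul_self_nonneg b))
  have hg := Complex.nonneg_iff.1 (map_nonneg g (star_mul_self_nonneg b))
  refine Complex.ext ?_ (hf.2.symm.trans hg.2)
  have hsq := congr($(h b) ^ 2)
  rwa [norm_sq_toPreGNS, norm_sq_toPreGNS] at hsq

end PositiveFunctionals

section NormalFunctionals

open Ring Finset Filter Topology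

variable {H : Type} [NormedAddCommGroup H] [InnerProductSpace ℂ H] [CompleteSpace H]
  {M : VonNeumannAlgebra H}

lemma exists_positiveLinearMap_eq {f : M →ₗ[ℂ] ℂ} (hf : VNIsPos f) :
    ∃ φ : M →ₚ[ℂ] ℂ, φ.toLinearMap = f := by
  refine ⟨.mk₀ f fun a ha => ?_, rfl⟩
  obtain ⟨b, rfl⟩ := CStarAlgebra.nonneg_iff_eq_star_mul_self.1 ha
  exact hf b

lemma vnIsNormal_of_le {p f : M →ₚ[ℂ] ℂ} (hf : VNIsNormal f.toLinearMap)
    (hle : ∀ a, p (star a * a) ≤ f (star a * a)) : VNIsNormal p.toLinearMap := by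
  intro ι _ _ _ x xsup hx hmono hbdd hub hlub
  refine ⟨?_, fun u hu => ?_⟩
  · rintro _ ⟨i, rfl⟩
    exact OrderHomClass.mono p (hub i)
  · have hdiff (i : ι) : p xsup - p (x i) ≤ f xsup - f (x i) := by
      have hxi : x i ≤ xsup := hub i
      obtain ⟨b, hb⟩ := CStarAlgebra.nonneg_iff_eq_star_mul_self.1 (sub_nonneg.2 hxi)
      rw [← map_sub, ← map_sub, hb]
      exact hle b
    have hbound : f xsup ≤ f xsup - p xsup + u := by
      refine (hf ι x xsup hx hmono hbdd hub hlub).2 ?_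
      rintro _ ⟨i, rfl⟩
      have hui : p (x i) ≤ u := hu ⟨i, rfl⟩
      calc f (x i) = f xsup - (f xsup - f (x i)) := by ring
        _ ≤ f xsup - (p xsup - p (x i)) := sub_le_sub_left (hdiff i) _
        _ = f xsup - p xsup + p (x i) := by ring
        _ ≤ f xsup - p xsup + u := by gcongr
    calc p xsup = f xsup + (p xsup - f xsup) := by ring
      _ ≤ f xsup - p xsup + u + (p xsup - f xsup) := by gcongr
      _ = u := by ring

lemma exists_re_apply_lt_of_antitone {f : M →ₚ[ℂ] ℂ} (hf : VNIsNormal f.toLinearMap) {x : ℕ → M}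
    (hx : ∀ n, 0 ≤ x n) (hanti : Antitone x) (hlim : TendstoStrongly x 0) {ε : ℝ} (hε : 0 < ε) :
    ∃ n, (f (x n)).re < ε := by
  have hlub : IsLUB (Set.range fun n => f (x 0 - x n)) (f (x 0)) := by
    have hpos (n : ℕ) : 0 ≤ x 0 - x n := sub_nonneg.2 (hanti n.zero_le)
    have hle (n : ℕ) : x 0 - x n ≤ x 0 := sub_le_self _ (hx n)
    have hmono (i j : ℕ) (hij : i ≤ j) : x 0 - x i ≤ x 0 - x j := sub_le_sub_left (hanti hij) _
    have hnorm (n : ℕ) : ‖x 0 - x n‖ ≤ ‖x 0‖ :=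
      CStarAlgebra.norm_le_norm_of_nonneg_of_le (hpos n) (hle n)
    refine hf ℕ (fun n => x 0 - x n) (x 0)
      (fun n => (ContinuousLinearMap.nonneg_iff_isPositive _).1 (hpos n)) hmono ⟨‖x 0‖, hnorm⟩ hle
      fun z hz => ?_
    have h := (hlim.const_sub (x 0)).le_of_eventually_le (z := z) (.of_forall hz)
    rwa [sub_zero] at h
  by_contra! hge
  have hle : f (x 0) ≤ f (x 0) - ε := by
    refine hlub.2 ?_
    rintro _ ⟨n, rfl⟩
    have hn : (ε : ℂ) ≤ f (x n) :=
      Complex.le_def.2 ⟨hge n, (Complex.nonneg_iff.1 (map_nonneg f (hx n))).2⟩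
    simpa only [map_sub] using sub_le_sub_left hn _
  have h := (Complex.le_def.1 hle).1
  rw [Complex.sub_re, Complex.ofReal_re] at h
  linarith

lemma apply_kerProj_eq_zero_of_bounded {f : M →ₚ[ℂ] ℂ} (hf : VNIsNormal f.toLinearMap)
    {a : ℕ → M} {b : M} {C : ℝ} (ha : ∀ n, 0 ≤ a n) (hmono : Monotone a)
    (hb : TendstoStrongly (fun n => (1 + a n)⁻¹ʳ) b) (hC : ∀ n, (f (a n)).re ≤ C) :
    f (kerProj b) = 0 := by
  set p := kerProj b with hp
  have hproj : IsStarProjection p := isStarProjection_kerProj b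
  have hlim : TendstoStrongly (fun n => p * (1 + a n)⁻¹ʳ * p) 0 := by
    simpa only [mul_assoc, hp, mul_kerProj, mul_zero] using (hb.mul_right p).mul_left p
  have hanti : Antitone fun n => p * (1 + a n)⁻¹ʳ * p := fun m n hmn =>
    hproj.isSelfAdjoint.conjugate_le_conjugate
      (inverse_one_add_le_inverse_one_add (ha m) (hmono hmn))
  have hbound (t : ℝ) (ht : 0 < t) : 2 * t * (f p).re ≤ 1 + (f 1).re + C := by
    obtain ⟨n, hn⟩ := exists_re_apply_lt_of_antitone hf
      (fun n => hproj.isSelfAdjoint.conjugate_nonneg (inverse_one_add_nonneg (ha n)))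
      hanti hlim (inv_pos.2 (pow_pos ht 2))
    have h := (Complex.le_def.1
      (OrderHomClass.mono f (two_mul_smul_le hproj.isSelfAdjoint (ha n) t))).1
    rw [map_add, map_add, Complex.add_re, Complex.add_re, re_apply_smul, re_apply_smul] at h
    have ht2 : t ^ 2 * (f (p * (1 + a n)⁻¹ʳ * p)).re ≤ 1 := by
      rw [← mul_inv_cancel₀ (pow_pos ht 2).ne']
      gcongr
    linarith [hC n]
  have hp0 := Complex.nonneg_iff.1 (map_nonneg f hproj.nonneg)
  have h1 := (Complex.nonneg_iff.1 (map_nonneg f (zero_le_one' M))).1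
  have ha0 := (Complex.nonneg_iff.1 (map_nonneg f (ha 0))).1
  refine Complex.ext (hp0.1.antisymm' (not_lt.1 fun hpos => ?_)) hp0.2.symm
  have hC0 := ha0.trans (hC 0)
  have h := hbound ((1 + (f 1).re + C) / (f p).re) (by positivity)
  rw [mul_assoc, div_mul_cancel₀ _ hpos.ne'] at h
  linarith

lemma tendsto_apply_zero_of_smul_star_mul_self_le {x a : ℕ → M} {b : M}
    (hle : ∀ k, ∀ᶠ n in atTop, (2 ^ k : ℝ) • (star (x k) * x k) ≤ a n)
    (hb : TendstoStrongly (fun n => (1 + a n)⁻¹ʳ) b) (ξ : H) :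
    Tendsto (fun k => (x k).1 (b.1 ξ)) atTop (𝓝 0) := by
  have hbound (k : ℕ) : ‖(x k).1 (b.1 ξ)‖ ^ 2 ≤ 2⁻¹ ^ k * ‖ξ‖ ^ 2 := by
    have hlim := ((((x k).1.continuous.tendsto _).comp (hb ξ)).norm.pow 2)
    refine le_of_tendsto hlim ((hle k).mono fun n hn => ?_)
    have hnorm := mul_sq_norm_mul_inverse_one_add_le (by positivity) hn
    calc ‖(x k).1 ((1 + a n)⁻¹ʳ.1 ξ)‖ ^ 2 ≤ (‖x k * (1 + a n)⁻¹ʳ‖ * ‖ξ‖) ^ 2 := by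
          gcongr
          exact (x k * (1 + a n)⁻¹ʳ).1.le_opNorm ξ
      _ ≤ 2⁻¹ ^ k * ‖ξ‖ ^ 2 := by
          rw [mul_pow]
          gcongr
          rwa [inv_pow, inv_eq_one_div, le_div_iff₀' (by positivity)]
  have hgeom : Tendsto (fun k : ℕ => (2⁻¹ : ℝ) ^ k * ‖ξ‖ ^ 2) atTop (𝓝 0) := by
    simpa only [zero_mul] using
      (tendsto_pow_atTop_nhds_zero_of_lt_one (by norm_num) (by norm_num)).mul_const (‖ξ‖ ^ 2)
  rw [tendsto_zero_iff_norm_tendsto_zero]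
  simpa only [Real.sqrt_sq (norm_nonneg _), Real.sqrt_zero] using
    (squeeze_zero (fun k => sq_nonneg _) hbound hgeom).sqrt

/- The weights `2 ^ k` keep `f (∑ 2 ^ k • x k⋆ * x k)` bounded while forcing `x k * R` to be of
norm at most `2 ^ (-k / 2)`. -/
lemma exists_tendsto_apply_zero_and_apply_kerProj_eq_zero {f : M →ₚ[ℂ] ℂ}
    (hf : VNIsNormal f.toLinearMap) {x : ℕ → M} (hx : ∀ k, ‖f.toPreGNS (x k)‖ ≤ 2⁻¹ ^ k) :
    ∃ R : M, 0 ≤ R ∧ (∀ ξ, Tendsto (fun k => (x k).1 (R.1 ξ)) atTop (𝓝 0)) ∧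
      f (kerProj R) = 0 := by
  set w : ℕ → M := fun k => (2 ^ k : ℝ) • (star (x k) * x k)
  have hw0 (k : ℕ) : 0 ≤ w k := smul_nonneg (by positivity) (star_mul_self_nonneg _)
  have hsum0 (m : ℕ) : 0 ≤ ∑ k ∈ range m, w k := sum_nonneg fun k _ => hw0 k
  have hmono : Monotone fun m => ∑ k ∈ range m, w k := fun m n hmn =>
    sum_le_sum_of_subset_of_nonneg (range_mono hmn) fun k _ _ => hw0 k
  have hfw (k : ℕ) : (f (w k)).re ≤ 2⁻¹ ^ k := by
    rw [re_apply_smul, ← norm_sq_toPreGNS]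
    calc (2 : ℝ) ^ k * ‖f.toPreGNS (x k)‖ ^ 2 ≤ 2 ^ k * (2⁻¹ ^ k) ^ 2 := by
          gcongr
          exact hx k
      _ = 2⁻¹ ^ k := by rw [sq, ← mul_assoc, ← mul_pow, mul_inv_cancel₀ two_ne_zero, one_pow,
        one_mul]
  have hfsum (m : ℕ) : (f (∑ k ∈ range m, w k)).re ≤ 2 := by
    rw [map_sum, Complex.re_sum]
    exact (sum_le_sum fun k _ => hfw k).trans
      (by simpa only [one_div] using sum_geometric_two_le m)
  obtain ⟨R, hR, hR0, -⟩ := exists_tendstoStrongly_inverse_one_add hsum0 hmono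
  refine ⟨R, hR0, tendsto_apply_zero_of_smul_star_mul_self_le (fun k => ?_) hR,
    apply_kerProj_eq_zero_of_bounded hf hsum0 hmono hR hfsum⟩
  exact (eventually_gt_atTop k).mono fun m hm =>
    single_le_sum (fun j _ => hw0 j) (mem_range.2 hm)

lemma eq_zero_of_kerProj_apply_eq_zero (hM : VNFinite M) {r s : M} (hr : 0 ≤ r) (hs : 0 ≤ s)
    (hdisj : ∀ ξ η, r.1 ξ = s.1 η → r.1 ξ = 0) {ζ : H} (hrζ : (kerProj r).1 ζ = 0)
    (hsζ : (kerProj s).1 ζ = 0) : ζ = 0 := by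
  have hkerr {η : H} (hη : (kerProj r).1 (s.1 η) = 0) : s.1 η = 0 :=
    apply_eq_zero_of_kerProj_apply_eq_zero hM hr
      (fun _ ξ h => h.trans (hdisj ξ _ h.symm)) hη
  have happly (ξ : H) : (1 - kerProj r).1 ξ = ξ - (kerProj r).1 ξ := rfl
  have hidem (ξ : H) : (kerProj r).1 ((1 - kerProj r).1 ξ) = 0 :=
    congr(($((isStarProjection_kerProj r).mul_one_sub_self)).1 ξ)
  have hfix : (1 - kerProj r).1 ζ = ζ := by rw [happly, hrζ, sub_zero]
  rw [← hfix]
  refine apply_eq_zero_of_kerProj_apply_eq_zero hM hs (fun ξ η h => h.trans (hkerr ?_)) ?_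
  · rw [← h, hidem]
  · rwa [hfix]

lemma exists_isStarProjection_of_singular (hM : VNFinite M) {s g : M →ₚ[ℂ] ℂ}
    (hs : VNIsNormal s.toLinearMap) (hg : VNIsNormal g.toLinearMap)
    (hsg : VNSingular s.toLinearMap g.toLinearMap) :
    ∃ p q : M, IsStarProjection p ∧ IsStarProjection q ∧ g p = 0 ∧ s q = 0 ∧
      ∀ ζ, p.1 ζ = 0 → q.1 ζ = 0 → ζ = 0 := by
  have hcommon (p : M →ₚ[ℂ] ℂ) (hps : ∀ b, p (star b * b) ≤ s (star b * b))
      (hpg : ∀ b, p (star b * b) ≤ g (star b * b)) : p = 0 := by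
    have hp : p.toLinearMap = 0 := hsg p.toLinearMap
      (fun b => map_nonneg p (star_mul_self_nonneg b)) (vnIsNormal_of_le hs hps)
      (fun b => sub_nonneg.2 (hps b)) fun b => sub_nonneg.2 (hpg b)
    exact DFunLike.ext _ _ fun b => congr($hp b)
  choose x hxg hxs using fun k : ℕ =>
    exists_norm_toPreGNS_lt hcommon (ε := 2⁻¹ ^ k) (by positivity)
  obtain ⟨R, hR, hxR, hgR⟩ :=
    exists_tendsto_apply_zero_and_apply_kerProj_eq_zero hg fun k => (hxg k).le
  obtain ⟨S, hS, hxS, hsS⟩ :=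
    exists_tendsto_apply_zero_and_apply_kerProj_eq_zero hs fun k => (hxs k).le
  refine ⟨kerProj R, kerProj S, isStarProjection_kerProj R, isStarProjection_kerProj S, hgR, hsS,
    fun ζ => eq_zero_of_kerProj_apply_eq_zero hM hR hS fun ξ η h => ?_⟩
  have hsplit (k : ℕ) : (x k).1 (R.1 ξ) + (1 - x k).1 (S.1 η) = R.1 ξ := by
    rw [← h]
    exact add_sub_cancel ((x k).1 (R.1 ξ)) (R.1 ξ)
  have hlim := (hxR ξ).add (hxS η)
  simp only [hsplit, add_zero] at hlim
  exact tendsto_const_nhds_iff.1 hlim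

lemma apply_eq_zero_of_le {a b : M} (ha : 0 ≤ a) (hab : a ≤ b) {ξ : H} (hb : b.1 ξ = 0) :
    a.1 ξ = 0 := by
  have hre := re_inner_coe_apply_mono hab ξ
  rw [hb, inner_zero_left, Complex.zero_re] at hre
  have hsq := (norm_sq_apply_le_of_nonneg (a := a.1) ha ξ).trans
    (mul_nonpos_of_nonneg_of_nonpos (norm_nonneg _) hre)
  exact norm_eq_zero.1 (sq_eq_zero_iff.1 (hsq.antisymm (sq_nonneg _)))

lemma norm_sq_toPreGNS_inverse_one_add_le (f : M →ₚ[ℂ] ℂ) {a : M} (ha : 0 ≤ a) :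
    ‖f.toPreGNS (1 + a)⁻¹ʳ‖ ^ 2 ≤ (f (1 + a)⁻¹ʳ).re := by
  have hr0 := inverse_one_add_nonneg ha
  have hsq : star (1 + a)⁻¹ʳ * (1 + a)⁻¹ʳ ≤ (1 + a)⁻¹ʳ := by
    rw [hr0.star_eq, ← sub_nonneg]
    have hcomm : Commute (1 + a)⁻¹ʳ (1 - (1 + a)⁻¹ʳ) :=
      (Commute.one_right _).sub_right (Commute.refl _)
    simpa only [mul_sub, mul_one] using
      hcomm.mul_nonneg hr0 (sub_nonneg.2 (inverse_one_add_le_one ha))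
  rw [norm_sq_toPreGNS]
  exact (Complex.le_def.1 (OrderHomClass.mono f hsq)).1

/- For projections `p, q` with `p ∨ q = 1`, the elements `(1 + n (p + q))⁻¹ * n p` absorb the
kernel of `g` and converge to `1` modulo the kernel of `s`. -/
lemma exists_norm_toPreGNS_eq_zero_of_singular (hM : VNFinite M) {s g : M →ₚ[ℂ] ℂ}
    (hs : VNIsNormal s.toLinearMap) (hg : VNIsNormal g.toLinearMap)
    (hsg : VNSingular s.toLinearMap g.toLinearMap) {ε : ℝ} (hε : 0 < ε) :
    ∃ y : M, ‖g.toPreGNS y‖ = 0 ∧ ‖s.toPreGNS (1 - y)‖ < ε := by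
  obtain ⟨p, q, hp, hq, hgp, hsq, hker⟩ := exists_isStarProjection_of_singular hM hs hg hsg
  have hnull {f : M →ₚ[ℂ] ℂ} {e : M} (he : IsStarProjection e) (hf : f e = 0) :
      ‖f.toPreGNS e‖ = 0 := by
    rw [← sq_eq_zero_iff, norm_sq_toPreGNS, he.isSelfAdjoint.star_eq, he.isIdempotentElem.eq, hf,
      Complex.zero_re]
  have hd : 0 ≤ p + q := add_nonneg hp.nonneg hq.nonneg
  have hnd (n : ℕ) : 0 ≤ (n : ℝ) • (p + q) := smul_nonneg n.cast_nonneg hd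
  have hlim : TendstoStrongly (fun n : ℕ => (1 + (n : ℝ) • (p + q))⁻¹ʳ) 0 := fun ζ =>
    have hζ : (p + q).1 ((kerProj (p + q)).1 ζ) = 0 := congr(($(mul_kerProj (p + q))).1 ζ)
    tendsto_inverse_one_add_smul_apply_zero hd <| hker _
      (apply_eq_zero_of_le hp.nonneg (le_add_of_nonneg_right hq.nonneg) hζ)
      (apply_eq_zero_of_le hq.nonneg (le_add_of_nonneg_left hp.nonneg) hζ)
  have hanti : Antitone fun n : ℕ => (1 + (n : ℝ) • (p + q))⁻¹ʳ := fun m n hmn =>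
    inverse_one_add_le_inverse_one_add (hnd m) (by gcongr)
  obtain ⟨n, hn⟩ := exists_re_apply_lt_of_antitone hs
    (fun n => inverse_one_add_nonneg (hnd n)) hanti hlim (pow_pos hε 2)
  set r := (1 + (n : ℝ) • (p + q))⁻¹ʳ with hr
  have hsplit : 1 - (n : ℝ) • r * p = r + (n : ℝ) • r * q := by
    have h := inverse_one_add_mul_self (hnd n)
    rw [mul_smul_comm, mul_add, smul_add, ← hr, eq_sub_iff_add_eq] at h
    rw [smul_mul_assoc, smul_mul_assoc, ← h]
    abel
  refine ⟨(n : ℝ) • r * p, norm_toPreGNS_mul_eq_zero (hnull hp hgp) _, ?_⟩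
  calc ‖s.toPreGNS (1 - (n : ℝ) • r * p)‖ ≤ ‖s.toPreGNS r‖ + ‖s.toPreGNS ((n : ℝ) • r * q)‖ := by
        rw [hsplit, map_add]
        exact norm_add_le _ _
    _ = ‖s.toPreGNS r‖ := by
        rw [norm_toPreGNS_mul_eq_zero (hnull hq hsq), add_zero]
    _ < ε := lt_of_pow_lt_pow_left₀ 2 hε.le
        ((norm_sq_toPreGNS_inverse_one_add_le s (hnd n)).trans_lt hn)

end NormalFunctionals

section Uniqueness

open Filter Topology

variable {H : Type} [NormedAddCommGroup H] [InnerProductSpace ℂ H] [CompleteSpace H]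
  {M : VonNeumannAlgebra H}

lemma norm_toPreGNS_eq_zero_of_absCont {r g : M →ₚ[ℂ] ℂ}
    (hac : VNAbsCont r.toLinearMap g.toLinearMap) {y : M} (hy : ‖g.toPreGNS y‖ = 0) :
    ‖r.toPreGNS y‖ = 0 := by
  obtain ⟨fn, α, hfn, -, -, hle, hlim⟩ := hac
  have hgy : g (star y * y) = 0 := by
    have := PositiveLinearMap.preGNS_norm_sq g (g.toPreGNS y)
    rw [hy] at this
    simpa using this.symm
  have hzero (n : ℕ) : fn n (star y * y) = 0 := by
    refine ((hfn n).1 y).antisymm' ((sub_nonneg.1 (hle n y)).trans_eq ?_)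
    exact congr(α n • $hgy).trans (smul_zero _)
  have hry : r (star y * y) = 0 :=
    tendsto_nhds_unique (hlim _) (by simp only [hzero, tendsto_const_nhds])
  rw [← sq_eq_zero_iff, norm_sq_toPreGNS, hry, Complex.zero_re]

lemma norm_toPreGNS_le_of_add_eq_add (hM : VNFinite M) {g r s r' s' : M →ₚ[ℂ] ℂ}
    (hg : VNIsNormal g.toLinearMap) (hs' : VNIsNormal s'.toLinearMap)
    (hsum : ∀ a, r a + s a = r' a + s' a) (hr : VNAbsCont r.toLinearMap g.toLinearMap)
    (hr' : VNAbsCont r'.toLinearMap g.toLinearMap)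
    (hsg' : VNSingular s'.toLinearMap g.toLinearMap) (x : M) :
    ‖r.toPreGNS x‖ ≤ ‖r'.toPreGNS x‖ := by
  have hbound (ε : ℝ) (hε : 0 < ε) :
      ‖r.toPreGNS x‖ ^ 2 ≤ ‖r'.toPreGNS x‖ ^ 2 + (‖x‖ * ε) ^ 2 := by
    obtain ⟨y, hgy, hsy⟩ := exists_norm_toPreGNS_eq_zero_of_singular hM hs' hg hsg' hε
    set z := x * (1 - y) with hz
    calc ‖r.toPreGNS x‖ ^ 2 = ‖r.toPreGNS z‖ ^ 2 := by
          rw [hz, norm_toPreGNS_mul_one_sub (norm_toPreGNS_eq_zero_of_absCont hr hgy)]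
      _ ≤ ‖r.toPreGNS z‖ ^ 2 + ‖s.toPreGNS z‖ ^ 2 := le_add_of_nonneg_right (sq_nonneg _)
      _ = ‖r'.toPreGNS z‖ ^ 2 + ‖s'.toPreGNS z‖ ^ 2 := by
          simp only [norm_sq_toPreGNS, ← Complex.add_re, hsum]
      _ = ‖r'.toPreGNS x‖ ^ 2 + ‖s'.toPreGNS z‖ ^ 2 := by
          rw [hz, norm_toPreGNS_mul_one_sub (norm_toPreGNS_eq_zero_of_absCont hr' hgy)]
      _ ≤ ‖r'.toPreGNS x‖ ^ 2 + (‖x‖ * ε) ^ 2 := by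
          gcongr
          exact (norm_toPreGNS_mul_le s' x (1 - y)).trans (by gcongr)
  have hlim : Tendsto (fun ε : ℝ => ‖r'.toPreGNS x‖ ^ 2 + (‖x‖ * ε) ^ 2) (𝓝[>] 0)
      (𝓝 (‖r'.toPreGNS x‖ ^ 2)) :=
    tendsto_nhdsWithin_of_tendsto_nhds <|
      Continuous.tendsto' (by fun_prop) _ _ (by rw [mul_zero, sq (0 : ℝ), mul_zero, add_zero])
  exact le_of_sq_le_sq (ge_of_tendsto hlim (eventually_mem_nhdsWithin.mono hbound)) (norm_nonneg _)

lemma eq_of_isLebDecomp (hM : VNFinite M) {f g r s r' s' : M →ₗ[ℂ] ℂ} (hg : VNIsPos g)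
    (hgn : VNIsNormal g) (h : VNIsLebDecomp f g r s) (h' : VNIsLebDecomp f g r' s') : r = r' := by
  obtain ⟨hr, -, hs, hsn, rfl, hrg, hsg⟩ := h
  obtain ⟨hr', -, hs', hsn', hsum, hrg', hsg'⟩ := h'
  obtain ⟨g, rfl⟩ := exists_positiveLinearMap_eq hg
  obtain ⟨r, rfl⟩ := exists_positiveLinearMap_eq hr
  obtain ⟨s, rfl⟩ := exists_positiveLinearMap_eq hs
  obtain ⟨r', rfl⟩ := exists_positiveLinearMap_eq hr'
  obtain ⟨s', rfl⟩ := exists_positiveLinearMap_eq hs'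
  have hadd (a : M) : r a + s a = r' a + s' a := congr($hsum a)
  have heq : r = r' := eq_of_norm_toPreGNS_eq fun x => le_antisymm
    (norm_toPreGNS_le_of_add_eq_add hM hgn hsn' hadd hrg hrg' hsg' x)
    (norm_toPreGNS_le_of_add_eq_add hM hgn hsn (fun a => (hadd a).symm) hrg' hrg hsg x)
  rw [heq]

end Uniqueness

end VNLebesgue

/-- **Corollary 2.11**: on a finite von Neumann algebra the Lebesgue decomposition of
normal positive functionals is unique. -/
theorem vN_finite_lebesgue_unique
    {H : Type} [NormedAddCommGroup H] [InnerProductSpace ℂ H] [CompleteSpace H]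
    (M : VonNeumannAlgebra H) (hM : VNFinite M) :
    VNLebDecompUnique M := by
  intro f g _ _ hg hgn r s r' s' h h'
  have hr : r = r' := VNLebesgue.eq_of_isLebDecomp hM hg hgn h h'
  obtain ⟨-, -, -, -, hf, -, -⟩ := h
  obtain ⟨-, -, -, -, hf', -, -⟩ := h'
  exact ⟨hr, add_left_cancel (a := r) (by rw [← hf, hf', hr])⟩
end
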